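/- The Poincaré polynomial of the complex Grassmannian G(k,n) is q^{nk-k²}·[n choose k], where [n choose k] is the Gaussian binomial coefficient in the variable q (with quantum integers [m] = q^{m-1}+q^{m-3}+···+q^{1-m}); equivalently, the sum over d of dim H_d(G(k,n);ℚ)·q^d equals q^{nk-k²}·[n]!/([k]![n-k]!). -/

import Mathlib

open CategoryTheory

noncomputable section

/-- The singular chain complex of a topological space with coefficients in a commutative ring. -/
def singularComplex (R : Type) [CommRing R] (X : Type) [TopologicalSpace X] :
    ChainComplex (ModuleCat R) ℕ :=
  (AlgebraicTopology.alternatingFaceMapComplex (ModuleCat R)).obj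
    (((SimplicialObject.whiskering _ _).obj (ModuleCat.free R)).obj
      (TopCat.toSSet.obj (TopCat.of X)))

/-- Singular homology of `X` with coefficients in `R`. -/
def singularHomology (R : Type) [CommRing R] (X : Type) [TopologicalSpace X] (d : ℕ) :
    ModuleCat R :=
  (singularComplex R X).homology d

/-- The `d`-th Betti number: the dimension of `d`-th rational singular homology. -/
def betti (X : Type) [TopologicalSpace X] (d : ℕ) : ℕ :=
  Module.finrank ℚ (singularHomology ℚ X d)

/-- `X` has (rational) Euler characteristic `m`: its Betti numbers vanish from some point on,
and the alternating sum of the Betti numbers equals `m`. -/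
def eulerCharEq (X : Type) [TopologicalSpace X] (m : ℤ) : Prop :=
  ∃ M : ℕ, (∀ d ≥ M, betti X d = 0) ∧
    (∑ d ∈ Finset.range M, (-1 : ℤ) ^ d * betti X d) = m

/-- The complex Grassmannian `G(k,n)` of `k`-dimensional subspaces of `ℂ^n`, realized as the
space of rank-`k` orthogonal projection matrices, with the subspace topology. -/
def Gr (k n : ℕ) : Type :=
  {P : Matrix (Fin n) (Fin n) ℂ // P * P = P ∧ P.conjTranspose = P ∧ P.trace = (k : ℂ)}

instance (k n : ℕ) : TopologicalSpace (Gr k n) :=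
  inferInstanceAs (TopologicalSpace
    {P : Matrix (Fin n) (Fin n) ℂ // P * P = P ∧ P.conjTranspose = P ∧ P.trace = (k : ℂ)})


/-- The quantum integer `[k] = q^(k-1) + q^(k-3) + ⋯ + q^(1-k)`. -/
def qint (k : ℕ) (q : ℝ) : ℝ := ∑ m ∈ Finset.range k, q ^ ((k : ℤ) - 1 - 2 * m)

/-- The quantum factorial `[k]! = [k][k-1]⋯[1]`. -/
def qfact (k : ℕ) (q : ℝ) : ℝ := ∏ m ∈ Finset.range k, qint (m + 1) q

/-- The Gaussian (quantum) binomial coefficient `[i choose j] = [i]!/([j]![i-j]!)`. -/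
def qbinom (i j : ℕ) (q : ℝ) : ℝ := qfact i q / (qfact j q * qfact (i - j) q)

/-- `p` is the Poincaré polynomial of `X`: the Betti numbers of `X` vanish from some point on,
and for every nonzero `q`, `p q = Σ_d dim H_d(X;ℚ) q^d`. -/
def IsPoincarePoly (X : Type) [TopologicalSpace X] (p : ℝ → ℝ) : Prop :=
  ∃ M : ℕ, (∀ d ≥ M, betti X d = 0) ∧
    ∀ q : ℝ, q ≠ 0 → p q = ∑ d ∈ Finset.range M, (betti X d : ℝ) * q ^ d

open Limits

/-!
The big cell `Gr.bigCell k I` of the subspaces that project isomorphically to the coordinates in `I`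
is identified with a complex vector space by reduced echelon matrices. Adding the big cells one by
one, in the order of the binary numbers with digits `I`, filters the Grassmannian by open sets. In
the chart at `I`, the points covered by earlier cells are the complement of the linear subspace on
which the entries above the pivots vanish (the Schubert cell of `I`). By excision, the step at `I`
therefore has the relative homology of a vector space modulo the complement of a subspace of real
codimension twice the number of entries above the pivots: it is free of rank one, in that degree.
All these degrees are even, so the connecting maps vanish and the Betti numbers count the
`k`-element subsets by inversions. The generating function of inversions satisfies the `q`-Pascal
recursion of the Gaussian binomial coefficients.
-/

lemma linearMap_ext_single {R α M : Type*} [Semiring R] [AddCommMonoid M] [Module R M]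
    {f g : (α →₀ R) →ₗ[R] M} (h : ∀ a, f (Finsupp.single a 1) = g (Finsupp.single a 1)) :
    f = g :=
  Finsupp.lhom_ext' fun a => LinearMap.ext_ring (h a)

lemma map_mem_of_mem_supported {R α M : Type*} [Semiring R] [AddCommMonoid M] [Module R M]
    {s : Set α} (f : (α →₀ R) →ₗ[R] M) (p : Submodule R M)
    (h : ∀ a ∈ s, f (Finsupp.single a 1) ∈ p) {x : α →₀ R} (hx : x ∈ Finsupp.supported R R s) :
    f x ∈ p := by
  suffices h' : Finsupp.supported R R s ≤ p.comap f from h' hx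
  rw [Finsupp.supported_eq_span_single, Submodule.span_le, Set.image_subset_iff]
  exact h

/-- Formal chains on tuples of `m` vertices of `W`, that is, on formal simplices of dimension
`m - 1`. The chains on the empty tuple are included, so that this is the augmented complex of the
full simplex on `W`. -/
abbrev VertexChain (R W : Type*) [CommRing R] (m : ℕ) : Type _ := (Fin m → W) →₀ R

namespace VertexChain

variable {R W W' : Type*} [CommRing R] {m : ℕ}

/-- The simplicial boundary of a formal chain. -/
def bd : VertexChain R W (m + 1) →ₗ[R] VertexChain R W m :=
  Finsupp.linearCombination R fun v =>
    ∑ i : Fin (m + 1), (-1 : R) ^ (i : ℕ) • Finsupp.single (v ∘ i.succAbove) 1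

/-- The join of a formal chain with an apex, which becomes the first vertex. -/
def cone (b : W) : VertexChain R W m →ₗ[R] VertexChain R W (m + 1) :=
  Finsupp.lmapDomain R R fun v => (Fin.cons b v : Fin (m + 1) → W)

/-- The map of formal chains induced by a map of vertices. -/
def push (g : W → W') : VertexChain R W m →ₗ[R] VertexChain R W' m :=
  Finsupp.lmapDomain R R (g ∘ ·)

lemma bd_single (v : Fin (m + 1) → W) :
    bd (Finsupp.single v (1 : R)) =
      ∑ i : Fin (m + 1), (-1 : R) ^ (i : ℕ) • Finsupp.single (v ∘ i.succAbove) 1 := by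
  simp [bd]

lemma cone_single (b : W) (v : Fin m → W) (c : R) :
    cone b (Finsupp.single v c) = Finsupp.single (Fin.cons b v) c :=
  Finsupp.mapDomain_single

lemma push_single (g : W → W') (v : Fin m → W) (c : R) :
    push g (Finsupp.single v c) = Finsupp.single (g ∘ v) c :=
  Finsupp.mapDomain_single

lemma cons_comp_succ_succAbove (b : W) (v : Fin (m + 1) → W) (i : Fin (m + 1)) :
    (Fin.cons b v : Fin (m + 2) → W) ∘ i.succ.succAbove =
      (Fin.cons b (v ∘ i.succAbove) : Fin (m + 1) → W) := by
  funext j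
  cases j using Fin.cases <;> simp [Fin.succ_succAbove_succ]

lemma bd_cone_zero (b : W) (x : VertexChain R W 0) : bd (cone b x) = x := by
  suffices h : bd ∘ₗ cone b = (LinearMap.id : VertexChain R W 0 →ₗ[R] _) from
    LinearMap.congr_fun h x
  refine linearMap_ext_single fun v => ?_
  simp [cone_single, bd_single, Subsingleton.elim _ v]

lemma bd_cone (b : W) (x : VertexChain R W (m + 1)) : bd (cone b x) = x - cone b (bd x) := by
  suffices h : bd ∘ₗ cone b = (LinearMap.id : VertexChain R W (m + 1) →ₗ[R] _) - cone b ∘ₗ bd from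
    LinearMap.congr_fun h x
  refine linearMap_ext_single fun v => ?_
  simp only [LinearMap.comp_apply, LinearMap.sub_apply, LinearMap.id_apply, cone_single, bd_single,
    map_sum, map_smul, Fin.sum_univ_succ (n := m + 1), cons_comp_succ_succAbove, Fin.val_succ,
    pow_succ, mul_neg_one, neg_smul, Finset.sum_neg_distrib, sub_eq_add_neg]
  simp [Function.comp_def]

lemma bd_bd (x : VertexChain R W (m + 2)) : bd (bd x) = 0 := by
  suffices h : bd ∘ₗ bd = (0 : VertexChain R W (m + 2) →ₗ[R] _) from LinearMap.congr_fun h x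
  clear x
  induction m with
  | zero =>
    refine linearMap_ext_single fun v => ?_
    rw [← Fin.cons_self_tail v, ← cone_single, LinearMap.comp_apply, bd_cone, map_sub,
      bd_cone_zero, sub_self, LinearMap.zero_apply]
  | succ m ih =>
    refine linearMap_ext_single fun v => ?_
    have hv : bd (bd (Finsupp.single (Fin.tail v) (1 : R))) = 0 := LinearMap.congr_fun ih _
    rw [← Fin.cons_self_tail v, ← cone_single, LinearMap.comp_apply, bd_cone, map_sub, bd_cone, hv,
      map_zero, sub_zero, sub_self, LinearMap.zero_apply]

section Subdivision

variable (β : ∀ m : ℕ, (Fin (m + 1) → W) → W)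

/-- The barycentric subdivision of formal chains, where `β` chooses the barycentre of every tuple
of vertices: subdivide the boundary and join the result with the barycentre. -/
def subdiv : ∀ m : ℕ, VertexChain R W m →ₗ[R] VertexChain R W m
  | 0 => LinearMap.id
  | m + 1 => Finsupp.linearCombination R fun v =>
      cone (β m v) (subdiv m (bd (Finsupp.single v 1)))

/-- The chain homotopy from barycentric subdivision to the identity. -/
def subdivHomotopy : ∀ m : ℕ, VertexChain R W m →ₗ[R] VertexChain R W (m + 1)
  | 0 => 0
  | m + 1 => Finsupp.linearCombination R fun v =>
      cone (β m v) (Finsupp.single v 1 - subdivHomotopy m (bd (Finsupp.single v 1)))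

lemma subdiv_single (v : Fin (m + 1) → W) :
    subdiv β (m + 1) (Finsupp.single v (1 : R)) =
      cone (β m v) (subdiv β m (bd (Finsupp.single v 1))) := by
  simp [subdiv]

lemma subdivHomotopy_single (v : Fin (m + 1) → W) :
    subdivHomotopy β (m + 1) (Finsupp.single v (1 : R)) =
      cone (β m v) (Finsupp.single v 1 - subdivHomotopy β m (bd (Finsupp.single v 1))) := by
  simp [subdivHomotopy]

lemma bd_subdiv (x : VertexChain R W (m + 1)) :
    bd (subdiv β (m + 1) x) = subdiv β m (bd x) := by
  suffices h : bd ∘ₗ subdiv β (m + 1) = subdiv β m ∘ₗ (bd : _ →ₗ[R] _) from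
    LinearMap.congr_fun h x
  clear x
  induction m with
  | zero =>
    refine linearMap_ext_single fun v => ?_
    rw [LinearMap.comp_apply, subdiv_single, bd_cone_zero, LinearMap.comp_apply]
  | succ m ih =>
    refine linearMap_ext_single fun v => ?_
    have hv : bd (subdiv β (m + 1) (bd (Finsupp.single v (1 : R)))) = 0 := by
      rw [← LinearMap.comp_apply, ih, LinearMap.comp_apply, bd_bd, map_zero]
    rw [LinearMap.comp_apply, subdiv_single, bd_cone, hv, map_zero, sub_zero, LinearMap.comp_apply]

lemma bd_subdivHomotopy (x : VertexChain R W (m + 1)) :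
    bd (subdivHomotopy β (m + 1) x) + subdivHomotopy β m (bd x) = x - subdiv β (m + 1) x := by
  suffices h : bd ∘ₗ subdivHomotopy β (m + 1) + subdivHomotopy β m ∘ₗ bd =
      (LinearMap.id : VertexChain R W (m + 1) →ₗ[R] _) - subdiv β (m + 1) from
    LinearMap.congr_fun h x
  clear x
  induction m with
  | zero =>
    refine linearMap_ext_single fun v => ?_
    simp [subdivHomotopy, subdiv, bd_cone]
  | succ m ih =>
    refine linearMap_ext_single fun v => ?_
    have hv := LinearMap.congr_fun ih (bd (Finsupp.single v 1))
    simp only [LinearMap.comp_apply, LinearMap.add_apply, LinearMap.sub_apply, LinearMap.id_apply,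
      bd_bd, map_zero, add_zero] at hv
    simp only [LinearMap.comp_apply, LinearMap.add_apply, LinearMap.sub_apply, LinearMap.id_apply,
      subdivHomotopy_single, subdiv_single, bd_cone, map_sub, hv]
    abel

end Subdivision

section Naturality

variable {β : ∀ m : ℕ, (Fin (m + 1) → W) → W} {β' : ∀ m : ℕ, (Fin (m + 1) → W') → W'} {g : W → W'}

lemma push_bd (x : VertexChain R W (m + 1)) : push g (bd x) = bd (push g x) := by
  suffices h : push g ∘ₗ bd = bd ∘ₗ (push g : VertexChain R W (m + 1) →ₗ[R] _) from
    LinearMap.congr_fun h x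
  refine linearMap_ext_single fun v => ?_
  simp [bd_single, push_single, Function.comp_assoc]

lemma push_cone (b : W) (x : VertexChain R W m) : push g (cone b x) = cone (g b) (push g x) := by
  suffices h : push g ∘ₗ cone b = cone (g b) ∘ₗ (push g : VertexChain R W m →ₗ[R] _) from
    LinearMap.congr_fun h x
  refine linearMap_ext_single fun v => ?_
  simp [cone_single, push_single, Fin.comp_cons]

lemma push_subdiv (hg : ∀ m v, g (β m v) = β' m (g ∘ v)) (x : VertexChain R W m) :
    push g (subdiv β m x) = subdiv β' m (push g x) := by
  suffices h : push g ∘ₗ subdiv β m = subdiv β' m ∘ₗ (push g : VertexChain R W m →ₗ[R] _) from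
    LinearMap.congr_fun h x
  clear x
  induction m with
  | zero => rfl
  | succ m ih =>
    refine linearMap_ext_single fun v => ?_
    have hv := LinearMap.congr_fun ih (bd (Finsupp.single v 1))
    simp only [LinearMap.comp_apply, push_bd] at hv
    simp only [LinearMap.comp_apply, subdiv_single, push_cone, hv, hg, push_single]

lemma push_subdivHomotopy (hg : ∀ m v, g (β m v) = β' m (g ∘ v)) (x : VertexChain R W m) :
    push g (subdivHomotopy β m x) = subdivHomotopy β' m (push g x) := by
  suffices h : push g ∘ₗ subdivHomotopy β m =
      subdivHomotopy β' m ∘ₗ (push g : VertexChain R W m →ₗ[R] _) from LinearMap.congr_fun h x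
  clear x
  induction m with
  | zero => simp [subdivHomotopy]
  | succ m ih =>
    refine linearMap_ext_single fun v => ?_
    have hv := LinearMap.congr_fun ih (bd (Finsupp.single v 1))
    simp only [LinearMap.comp_apply, push_bd] at hv
    simp only [LinearMap.comp_apply, subdivHomotopy_single, push_cone, map_sub, hv, hg, push_single]

end Naturality

section Mesh

variable [PseudoMetricSpace W] {β : ∀ m : ℕ, (Fin (m + 1) → W) → W} {r : ℝ}

lemma subdiv_single_mem_supported
    (hball : ∀ m v c ρ, (∀ i, dist (v i) c ≤ ρ) → dist (β m v) c ≤ ρ)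
    (hmesh : ∀ l < m, ∀ (v : Fin (l + 1) → W) D, (∀ i j, dist (v i) (v j) ≤ D) →
      ∀ i, dist (β l v) (v i) ≤ r * D)
    {v : Fin m → W} {D : ℝ} (hv : ∀ i j, dist (v i) (v j) ≤ D) :
    subdiv β m (Finsupp.single v (1 : R)) ∈ Finsupp.supported R R
      {w | (∀ c ρ, (∀ i, dist (v i) c ≤ ρ) → ∀ j, dist (w j) c ≤ ρ) ∧
        ∀ i j, dist (w i) (w j) ≤ r * D} := by
  induction m with
  | zero => exact Finsupp.single_mem_supported R _ ⟨fun _ _ h => h, fun i => i.elim0⟩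
  | succ m ih =>
    have hb := hmesh m m.lt_succ_self v D hv
    rw [subdiv_single, bd_single, map_sum, map_sum]
    refine Submodule.sum_mem _ fun i _ => ?_
    rw [map_smul, map_smul]
    refine Submodule.smul_mem _ _ (map_mem_of_mem_supported (cone (β m v)) _ (fun w hw => ?_)
      (ih (fun l hl => hmesh l (hl.trans m.lt_succ_self)) (v := v ∘ i.succAbove)
        fun a b => hv _ _))
    have hwb (j : Fin m) : dist (w j) (β m v) ≤ r * D :=
      hw.1 _ _ (fun a => by rw [dist_comm]; exact hb _) j
    rw [cone_single]
    refine Finsupp.single_mem_supported R _ ⟨fun c ρ h => ?_, fun a b => ?_⟩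
    · exact Fin.cases (hball _ _ _ _ h) (hw.1 c ρ fun a => h _)
    · cases a using Fin.cases with
      | zero =>
        cases b using Fin.cases with
        | zero => simpa using dist_nonneg.trans (hb 0)
        | succ b => simpa [dist_comm] using hwb b
      | succ a =>
        cases b using Fin.cases with
        | zero => simpa using hwb a
        | succ b => simpa using hw.2 a b

lemma iterate_subdiv_single_mem_supported
    (hball : ∀ m v c ρ, (∀ i, dist (v i) c ≤ ρ) → dist (β m v) c ≤ ρ)
    (hmesh : ∀ l < m, ∀ (v : Fin (l + 1) → W) D, (∀ i j, dist (v i) (v j) ≤ D) →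
      ∀ i, dist (β l v) (v i) ≤ r * D)
    {v : Fin m → W} {D : ℝ} (hv : ∀ i j, dist (v i) (v j) ≤ D) (k : ℕ) :
    (subdiv β m)^[k] (Finsupp.single v (1 : R)) ∈ Finsupp.supported R R
      {w | ∀ i j, dist (w i) (w j) ≤ r ^ k * D} := by
  induction k with
  | zero => exact Finsupp.single_mem_supported R _ (by simpa using hv)
  | succ k ih =>
    rw [Function.iterate_succ_apply']
    refine map_mem_of_mem_supported _ _ (fun w hw => ?_) ih
    refine Finsupp.supported_mono (fun u hu => ?_) (subdiv_single_mem_supported hball hmesh hw)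
    intro i j
    simpa only [pow_succ', mul_assoc] using hu.2 i j

end Mesh

end VertexChain

section AffineSimplex

variable {ι κ l : Type*} [Fintype ι] [Fintype κ] [Fintype l]

/-- The affine map between standard simplices with prescribed images of the vertices. -/
def affineSimplex (v : κ → stdSimplex ℝ ι) : C(stdSimplex ℝ κ, stdSimplex ℝ ι) where
  toFun t := ⟨fun j => ∑ i, t i * v i j, fun j => Finset.sum_nonneg fun i _ =>
      mul_nonneg (t.2.1 i) ((v i).2.1 j), by
    rw [Finset.sum_comm]
    simp_rw [← Finset.mul_sum, stdSimplex.sum_eq_one, mul_one]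
    exact stdSimplex.sum_eq_one t⟩
  continuous_toFun := by
    refine Continuous.subtype_mk (continuous_pi fun j => continuous_finsetSum _ fun i _ => ?_) _
    exact ((continuous_apply i).comp continuous_subtype_val).mul continuous_const

lemma affineSimplex_apply (v : κ → stdSimplex ℝ ι) (t : stdSimplex ℝ κ) (j : ι) :
    affineSimplex v t j = ∑ i, t i * v i j := rfl

lemma affineSimplex_vertex [DecidableEq ι] :
    affineSimplex (stdSimplex.vertex (S := ℝ) (X := ι)) = ContinuousMap.id _ := by
  ext t j
  simp [affineSimplex_apply, Pi.single_apply]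

lemma affineSimplex_comp_vertex [DecidableEq κ] (v : κ → stdSimplex ℝ ι) :
    affineSimplex v ∘ stdSimplex.vertex = v := by
  funext i
  ext j
  simp [affineSimplex_apply, Pi.single_apply]

lemma affineSimplex_comp (v : κ → stdSimplex ℝ ι) (w : l → stdSimplex ℝ κ) :
    (affineSimplex v).comp (affineSimplex w) = affineSimplex (affineSimplex v ∘ w) := by
  ext t j
  simp only [ContinuousMap.comp_apply, Function.comp_apply, affineSimplex_apply, Finset.sum_mul,
    Finset.mul_sum]
  rw [Finset.sum_comm]
  simp only [mul_assoc]

lemma affineSimplex_vertex_comp [DecidableEq κ] (f : l → κ) (t : stdSimplex ℝ l) :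
    affineSimplex (stdSimplex.vertex ∘ f) t = stdSimplex.map f t := by
  ext j
  rw [affineSimplex_apply, stdSimplex.map_coe, FunOnFinite.linearMap_apply_apply]
  simp [Pi.single_apply, Finset.sum_filter, eq_comm]

lemma affineSimplex_map (v : κ → stdSimplex ℝ ι) (f : l → κ) (t : stdSimplex ℝ l) :
    affineSimplex v (stdSimplex.map f t) = affineSimplex (v ∘ f) t := by
  classical
  rw [← affineSimplex_vertex_comp, ← ContinuousMap.comp_apply, affineSimplex_comp,
    ← Function.comp_assoc, affineSimplex_comp_vertex]

/-- The barycentre of a tuple of points of a standard simplex. -/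
def tupleBarycenter (m : ℕ) (v : Fin (m + 1) → stdSimplex ℝ ι) : stdSimplex ℝ ι :=
  affineSimplex v stdSimplex.barycenter

lemma affineSimplex_tupleBarycenter (v : κ → stdSimplex ℝ ι) (m : ℕ)
    (w : Fin (m + 1) → stdSimplex ℝ κ) :
    affineSimplex v (tupleBarycenter m w) = tupleBarycenter m (affineSimplex v ∘ w) :=
  DFunLike.congr_fun (affineSimplex_comp v w) _

lemma dist_stdSimplex_le_iff {x y : stdSimplex ℝ ι} {r : ℝ} (hr : 0 ≤ r) :
    dist x y ≤ r ↔ ∀ j, |x j - y j| ≤ r := by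
  rw [Subtype.dist_eq, dist_pi_le_iff hr]
  rfl

lemma dist_stdSimplex_le_one (x y : stdSimplex ℝ ι) : dist x y ≤ 1 :=
  (Metric.dist_le_diam_of_mem (bounded_stdSimplex ι) x.2 y.2).trans diam_stdSimplex_le

lemma affineSimplex_apply_sub (v : κ → stdSimplex ℝ ι) (t : stdSimplex ℝ κ) (j : ι) (a : ℝ) :
    affineSimplex v t j - a = ∑ i, t i * (v i j - a) := by
  simp [affineSimplex_apply, mul_sub, Finset.sum_sub_distrib, ← Finset.sum_mul]

lemma dist_affineSimplex_le {v : κ → stdSimplex ℝ ι} {c : stdSimplex ℝ ι} {r : ℝ}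
    (h : ∀ i, dist (v i) c ≤ r) (t : stdSimplex ℝ κ) : dist (affineSimplex v t) c ≤ r := by
  obtain ⟨i₀⟩ : Nonempty κ := by
    by_contra hκ
    rw [not_nonempty_iff] at hκ
    simpa using stdSimplex.sum_eq_one t
  have hr : 0 ≤ r := dist_nonneg.trans (h i₀)
  rw [dist_stdSimplex_le_iff hr]
  intro j
  rw [affineSimplex_apply_sub]
  calc |∑ i, t i * (v i j - c j)| ≤ ∑ i, t i * r := by
        refine (Finset.abs_sum_le_sum_abs _ _).trans (Finset.sum_le_sum fun i _ => ?_)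
        rw [abs_mul, abs_of_nonneg (stdSimplex.zero_le t i)]
        exact mul_le_mul_of_nonneg_left ((dist_stdSimplex_le_iff hr).1 (h i) j)
          (stdSimplex.zero_le t i)
    _ = r := by rw [← Finset.sum_mul, stdSimplex.sum_eq_one, one_mul]

lemma dist_tupleBarycenter_le {m : ℕ} {v : Fin (m + 1) → stdSimplex ℝ ι} {D : ℝ}
    (h : ∀ i j, dist (v i) (v j) ≤ D) (i₀ : Fin (m + 1)) :
    dist (tupleBarycenter m v) (v i₀) ≤ m / (m + 1) * D := by
  have hD : 0 ≤ D := dist_nonneg.trans (h 0 0)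
  rw [dist_stdSimplex_le_iff (by positivity)]
  intro j
  have hb (i : Fin (m + 1)) : (stdSimplex.barycenter : stdSimplex ℝ (Fin (m + 1))) i =
      1 / (m + 1) := (stdSimplex.barycenter_apply i).trans (by simp)
  rw [tupleBarycenter, affineSimplex_apply_sub,
    ← Finset.add_sum_erase _ _ (Finset.mem_univ i₀), sub_self, mul_zero, zero_add]
  calc |∑ i ∈ Finset.univ.erase i₀,
          (stdSimplex.barycenter : stdSimplex ℝ (Fin (m + 1))) i * (v i j - v i₀ j)|
      ≤ ∑ _i ∈ Finset.univ.erase i₀, (1 / (m + 1) : ℝ) * D := by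
        refine (Finset.abs_sum_le_sum_abs _ _).trans (Finset.sum_le_sum fun _ _ => ?_)
        rw [abs_mul, hb, abs_of_nonneg (by positivity)]
        exact mul_le_mul_of_nonneg_left ((dist_stdSimplex_le_iff hD).1 (h _ i₀) j) (by positivity)
    _ = m / (m + 1) * D := by
        rw [Finset.sum_const, Finset.card_erase_of_mem (Finset.mem_univ i₀), Finset.card_univ,
          Fintype.card_fin, Nat.add_sub_cancel, nsmul_eq_mul]
        ring

lemma dist_tupleBarycenter_le_of_lt {l m : ℕ} (hl : l < m) {v : Fin (l + 1) → stdSimplex ℝ ι}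
    {D : ℝ} (h : ∀ i j, dist (v i) (v j) ≤ D) (i : Fin (l + 1)) :
    dist (tupleBarycenter l v) (v i) ≤ m / (m + 1) * D := by
  refine (dist_tupleBarycenter_le h i).trans
    (mul_le_mul_of_nonneg_right ?_ (dist_nonneg.trans (h 0 0)))
  have : (l : ℝ) ≤ m := by exact_mod_cast hl.le
  rw [div_le_div_iff₀ (by positivity) (by positivity)]
  linarith

end AffineSimplex

/-- Singular chains of dimension `m - 1`, on simplices with `m` vertices. As for `VertexChain` this
is the augmented complex, since there is exactly one simplex without vertices. -/
abbrev SingularChain (R X : Type*) [CommRing R] [TopologicalSpace X] (m : ℕ) : Type _ :=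
  C(stdSimplex ℝ (Fin m), X) →₀ R

namespace SingularChain

section Subdivision

open VertexChain

variable {R X : Type*} [CommRing R] [TopologicalSpace X] {m n : ℕ}

/-- The `i`-th face of a singular simplex. -/
def face (σ : C(stdSimplex ℝ (Fin (m + 1)), X)) (i : Fin (m + 1)) : C(stdSimplex ℝ (Fin m), X) :=
  σ.comp ⟨stdSimplex.map i.succAbove, stdSimplex.continuous_map _⟩

/-- The boundary of a singular chain. -/
def bdry : SingularChain R X (m + 1) →ₗ[R] SingularChain R X m :=
  Finsupp.linearCombination R fun σ =>
    ∑ i : Fin (m + 1), (-1 : R) ^ (i : ℕ) • Finsupp.single (face σ i) 1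

lemma bdry_single (σ : C(stdSimplex ℝ (Fin (m + 1)), X)) :
    bdry (Finsupp.single σ (1 : R)) =
      ∑ i : Fin (m + 1), (-1 : R) ^ (i : ℕ) • Finsupp.single (face σ i) 1 := by
  simp [bdry]

/-- The singular chain obtained by composing affine simplices with a singular simplex. -/
def realize (σ : C(stdSimplex ℝ (Fin n), X)) :
    VertexChain R (stdSimplex ℝ (Fin n)) m →ₗ[R] SingularChain R X m :=
  Finsupp.lmapDomain R R fun v => σ.comp (affineSimplex v)

variable (σ : C(stdSimplex ℝ (Fin n), X))

lemma realize_single (v : Fin m → stdSimplex ℝ (Fin n)) (c : R) :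
    realize σ (Finsupp.single v c) = Finsupp.single (σ.comp (affineSimplex v)) c :=
  Finsupp.mapDomain_single

lemma realize_vertex :
    realize σ (Finsupp.single stdSimplex.vertex (1 : R)) = Finsupp.single σ 1 := by
  rw [realize_single, affineSimplex_vertex, ContinuousMap.comp_id]

lemma bdry_realize (x : VertexChain R (stdSimplex ℝ (Fin n)) (m + 1)) :
    bdry (realize σ x) = realize σ (bd x) := by
  suffices h : bdry ∘ₗ realize σ =
      realize σ ∘ₗ (bd : VertexChain R (stdSimplex ℝ (Fin n)) (m + 1) →ₗ[R] _) from
    LinearMap.congr_fun h x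
  refine linearMap_ext_single fun v => ?_
  simp only [LinearMap.comp_apply, realize_single, bdry_single, bd_single, map_sum, map_smul]
  refine Finset.sum_congr rfl fun i _ => ?_
  congr 2
  ext t
  simp [face, affineSimplex_map]

lemma realize_comp_affineSimplex {l : ℕ} (v : Fin l → stdSimplex ℝ (Fin n))
    (x : VertexChain R (stdSimplex ℝ (Fin l)) m) :
    realize (σ.comp (affineSimplex v)) x = realize σ (push (affineSimplex v) x) := by
  suffices h : realize (σ.comp (affineSimplex v)) = realize σ ∘ₗ
      (push (affineSimplex v) : VertexChain R (stdSimplex ℝ (Fin l)) m →ₗ[R] _) from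
    LinearMap.congr_fun h x
  refine linearMap_ext_single fun w => ?_
  simp only [LinearMap.comp_apply, realize_single, push_single, ContinuousMap.comp_assoc,
    affineSimplex_comp]

/-- Barycentric subdivision of singular chains. -/
def sd : SingularChain R X m →ₗ[R] SingularChain R X m :=
  Finsupp.linearCombination R fun σ =>
    realize σ (subdiv tupleBarycenter m (Finsupp.single stdSimplex.vertex 1))

/-- The chain homotopy from barycentric subdivision of singular chains to the identity. -/
def sdHomotopy : SingularChain R X m →ₗ[R] SingularChain R X (m + 1) :=
  Finsupp.linearCombination R fun σ =>
    realize σ (subdivHomotopy tupleBarycenter m (Finsupp.single stdSimplex.vertex 1))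

lemma sd_single : sd (Finsupp.single σ (1 : R)) =
    realize σ (subdiv tupleBarycenter n (Finsupp.single stdSimplex.vertex 1)) := by
  simp [sd]

lemma sdHomotopy_single : sdHomotopy (Finsupp.single σ (1 : R)) =
    realize σ (subdivHomotopy tupleBarycenter n (Finsupp.single stdSimplex.vertex 1)) := by
  simp [sdHomotopy]

lemma sd_realize (x : VertexChain R (stdSimplex ℝ (Fin n)) m) :
    sd (realize σ x) = realize σ (subdiv tupleBarycenter m x) := by
  suffices h : sd ∘ₗ realize σ = realize σ ∘ₗ
      (subdiv tupleBarycenter m : VertexChain R (stdSimplex ℝ (Fin n)) m →ₗ[R] _) from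
    LinearMap.congr_fun h x
  refine linearMap_ext_single fun v => ?_
  rw [LinearMap.comp_apply, LinearMap.comp_apply, realize_single, sd_single,
    realize_comp_affineSimplex, push_subdiv (affineSimplex_tupleBarycenter v), push_single,
    affineSimplex_comp_vertex]

lemma sdHomotopy_realize (x : VertexChain R (stdSimplex ℝ (Fin n)) m) :
    sdHomotopy (realize σ x) = realize σ (subdivHomotopy tupleBarycenter m x) := by
  suffices h : sdHomotopy ∘ₗ realize σ = realize σ ∘ₗ
      (subdivHomotopy tupleBarycenter m : VertexChain R (stdSimplex ℝ (Fin n)) m →ₗ[R] _) from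
    LinearMap.congr_fun h x
  refine linearMap_ext_single fun v => ?_
  rw [LinearMap.comp_apply, LinearMap.comp_apply, realize_single, sdHomotopy_single,
    realize_comp_affineSimplex, push_subdivHomotopy (affineSimplex_tupleBarycenter v), push_single,
    affineSimplex_comp_vertex]

lemma bdry_sd (x : SingularChain R X (m + 1)) : bdry (sd x) = sd (bdry x) := by
  suffices h : bdry ∘ₗ sd = sd ∘ₗ (bdry : SingularChain R X (m + 1) →ₗ[R] _) from
    LinearMap.congr_fun h x
  refine linearMap_ext_single fun σ => ?_
  rw [LinearMap.comp_apply, LinearMap.comp_apply, ← realize_vertex σ, sd_realize, bdry_realize,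
    bdry_realize, sd_realize, bd_subdiv]

lemma bdry_sdHomotopy (x : SingularChain R X (m + 1)) :
    bdry (sdHomotopy x) + sdHomotopy (bdry x) = x - sd x := by
  suffices h : bdry ∘ₗ sdHomotopy + sdHomotopy ∘ₗ bdry =
      (LinearMap.id : SingularChain R X (m + 1) →ₗ[R] _) - sd from LinearMap.congr_fun h x
  refine linearMap_ext_single fun σ => ?_
  simp only [LinearMap.comp_apply, LinearMap.add_apply, LinearMap.sub_apply, LinearMap.id_apply]
  rw [← realize_vertex σ, sdHomotopy_realize, sd_realize, bdry_realize, bdry_realize,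
    sdHomotopy_realize, ← map_add, bd_subdivHomotopy, map_sub]

variable (R) in
/-- The singular chains whose simplices each lie in some member of the family `𝒰`. In particular
`smallChains R {A} m` consists of the chains in the subset `A`. -/
def smallChains (𝒰 : Set (Set X)) (m : ℕ) : Submodule R (SingularChain R X m) :=
  Finsupp.supported R R {σ | ∃ U ∈ 𝒰, Set.range σ ⊆ U}

section SmallChains

variable {σ} {𝒰 : Set (Set X)}

lemma realize_mem_smallChains (hσ : ∃ U ∈ 𝒰, Set.range σ ⊆ U)
    (x : VertexChain R (stdSimplex ℝ (Fin n)) m) : realize σ x ∈ smallChains R 𝒰 m := by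
  obtain ⟨U, hU, hσU⟩ := hσ
  refine map_mem_of_mem_supported (s := Set.univ) _ _ (fun v _ => ?_) (by simp)
  rw [realize_single]
  exact Finsupp.single_mem_supported R _
    ⟨U, hU, Set.range_subset_iff.2 fun t => hσU (Set.mem_range_self _)⟩

lemma sd_mem_smallChains {x : SingularChain R X m} (hx : x ∈ smallChains R 𝒰 m) :
    sd x ∈ smallChains R 𝒰 m :=
  map_mem_of_mem_supported _ _ (fun τ hτ => by
    rw [sd_single]; exact realize_mem_smallChains hτ _) hx

lemma sdHomotopy_mem_smallChains {x : SingularChain R X m} (hx : x ∈ smallChains R 𝒰 m) :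
    sdHomotopy x ∈ smallChains R 𝒰 (m + 1) :=
  map_mem_of_mem_supported _ _ (fun τ hτ => by
    rw [sdHomotopy_single]; exact realize_mem_smallChains hτ _) hx

lemma iterate_sd_realize (k : ℕ) (x : VertexChain R (stdSimplex ℝ (Fin n)) m) :
    sd^[k] (realize σ x) = realize σ ((subdiv tupleBarycenter m)^[k] x) :=
  (Function.Semiconj.iterate_right (f := realize σ) (fun y => (sd_realize σ y).symm) k x).symm

lemma exists_iterate_sd_single_mem_smallChains (h𝒰 : ∀ U ∈ 𝒰, IsOpen U)
    {σ : C(stdSimplex ℝ (Fin (n + 1)), X)} (hσ : Set.range σ ⊆ ⋃₀ 𝒰) :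
    ∃ k, sd^[k] (Finsupp.single σ (1 : R)) ∈ smallChains R 𝒰 (n + 1) := by
  obtain ⟨δ, hδ, hball⟩ := lebesgue_number_lemma_of_metric isCompact_univ
    (fun U : 𝒰 => (h𝒰 U U.2).preimage σ.continuous) (fun t _ => by
      simpa using hσ (Set.mem_range_self t))
  obtain ⟨k, hk⟩ := exists_pow_lt_of_lt_one hδ
    (show ((n + 1 : ℕ) : ℝ) / ((n + 1 : ℕ) + 1) < 1 by
      rw [div_lt_one (by positivity)]
      exact lt_add_one _)
  refine ⟨k, ?_⟩
  rw [← realize_vertex σ, iterate_sd_realize]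
  refine map_mem_of_mem_supported _ _ (fun w hw => ?_)
    (iterate_subdiv_single_mem_supported (fun m v c r h => dist_affineSimplex_le h _)
      (fun l hl v D h => dist_tupleBarycenter_le_of_lt hl h)
      (fun i j => dist_stdSimplex_le_one _ _) k)
  obtain ⟨U, hU⟩ := hball (w 0) (Set.mem_univ _)
  rw [realize_single]
  refine Finsupp.single_mem_supported R _ ⟨U, U.2, Set.range_subset_iff.2 fun t => hU ?_⟩
  rw [Metric.mem_ball]
  exact (dist_affineSimplex_le (fun i => hw i 0) t).trans_lt ((mul_one _).trans_lt hk)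

lemma exists_iterate_sd_mem_smallChains (h𝒰 : ∀ U ∈ 𝒰, IsOpen U)
    {x : SingularChain R X (n + 1)} (hx : x ∈ smallChains R {⋃₀ 𝒰} (n + 1)) :
    ∃ k, sd^[k] x ∈ smallChains R 𝒰 (n + 1) := by
  have hmono {y : SingularChain R X (n + 1)} {k l : ℕ} (hkl : k ≤ l)
      (hy : sd^[k] y ∈ smallChains R 𝒰 (n + 1)) : sd^[l] y ∈ smallChains R 𝒰 (n + 1) := by
    induction l, hkl using Nat.le_induction with
    | base => exact hy
    | succ l _ ih => exact Function.iterate_succ_apply' sd l y ▸ sd_mem_smallChains ih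
  rw [smallChains, Finsupp.supported_eq_span_single] at hx
  induction hx using Submodule.span_induction with
  | mem x h =>
    obtain ⟨τ, ⟨U, rfl, hτ⟩, rfl⟩ := h
    exact exists_iterate_sd_single_mem_smallChains h𝒰 hτ
  | zero => exact ⟨0, Submodule.zero_mem _⟩
  | add x y _ _ hx hy =>
    obtain ⟨k, hk⟩ := hx
    obtain ⟨l, hl⟩ := hy
    refine ⟨max k l, ?_⟩
    rw [iterate_map_add]
    exact Submodule.add_mem _ (hmono (le_max_left k l) hk) (hmono (le_max_right k l) hl)
  | smul c x _ hx =>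
    obtain ⟨k, hk⟩ := hx
    refine ⟨k, ?_⟩
    rw [← Module.End.pow_apply, map_smul, Module.End.pow_apply]
    exact Submodule.smul_mem _ _ hk

lemma exists_sub_iterate_sd_sub_bdry_mem_smallChains {𝒱 : Set (Set X)}
    {x : SingularChain R X (n + 1)}
    (hx : x ∈ smallChains R 𝒱 (n + 1)) (hdx : bdry x ∈ smallChains R 𝒰 n) (k : ℕ) :
    ∃ y ∈ smallChains R 𝒱 (n + 2), x - sd^[k] x - bdry y ∈ smallChains R 𝒰 (n + 1) := by
  suffices h : sd^[k] x ∈ smallChains R 𝒱 (n + 1) ∧ bdry (sd^[k] x) ∈ smallChains R 𝒰 n ∧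
      ∃ y ∈ smallChains R 𝒱 (n + 2), x - sd^[k] x - bdry y ∈ smallChains R 𝒰 (n + 1) from h.2.2
  induction k with
  | zero => exact ⟨hx, hdx, 0, Submodule.zero_mem _, by simp⟩
  | succ k ih =>
    obtain ⟨hk, hdk, y, hy, hxy⟩ := ih
    rw [Function.iterate_succ_apply']
    refine ⟨sd_mem_smallChains hk, by rw [bdry_sd]; exact sd_mem_smallChains hdk,
      y + sdHomotopy (sd^[k] x), Submodule.add_mem _ hy (sdHomotopy_mem_smallChains hk), ?_⟩
    have hstep := Submodule.add_mem _ hxy (sdHomotopy_mem_smallChains hdk)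
    have hsd : sdHomotopy (bdry (sd^[k] x)) =
        sd^[k] x - sd (sd^[k] x) - bdry (sdHomotopy (sd^[k] x)) :=
      eq_sub_of_add_eq' (bdry_sdHomotopy _)
    rw [hsd] at hstep
    rw [map_add]
    convert hstep using 1
    abel

theorem exists_sub_bdry_mem_smallChains (h𝒰 : ∀ U ∈ 𝒰, IsOpen U) {x : SingularChain R X (n + 1)}
    (hx : x ∈ smallChains R {⋃₀ 𝒰} (n + 1)) (hdx : bdry x ∈ smallChains R 𝒰 n) :
    ∃ y ∈ smallChains R {⋃₀ 𝒰} (n + 2), x - bdry y ∈ smallChains R 𝒰 (n + 1) := by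
  obtain ⟨k, hk⟩ := exists_iterate_sd_mem_smallChains h𝒰 hx
  obtain ⟨y, hy, hxy⟩ := exists_sub_iterate_sd_sub_bdry_mem_smallChains hx hdx k
  refine ⟨y, hy, ?_⟩
  convert Submodule.add_mem _ hxy hk using 1
  abel

end SmallChains

end Subdivision

section ChainComplex

variable (R : Type) [CommRing R]

/-- The singular chain complex with coefficients in `R`, as a functor of the space. -/
def chains : TopCat.{0} ⥤ ChainComplex (ModuleCat.{0} R) ℕ :=
  TopCat.toSSet ⋙ (SimplicialObject.whiskering _ _).obj (ModuleCat.free R) ⋙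
    AlgebraicTopology.alternatingFaceMapComplex _

variable {R}

/-- The degree `n` part of the singular chain complex as a module of formal combinations of
continuous maps from the simplex with `n + 1` vertices. -/
def chainsEquiv (X : TopCat.{0}) (n : ℕ) :
    ((chains R).obj X).X n ≃ₗ[R] SingularChain R X (n + 1) :=
  Finsupp.domLCongr (X.toSSetObjEquiv (Opposite.op (SimplexCategory.mk n)))

lemma chainsEquiv_single (X : TopCat.{0}) (n : ℕ)
    (σ : (TopCat.toSSet.obj X).obj (Opposite.op (SimplexCategory.mk n))) :
    chainsEquiv X n (Finsupp.single σ (1 : R)) =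
      Finsupp.single (X.toSSetObjEquiv (Opposite.op (SimplexCategory.mk n)) σ) 1 :=
  Finsupp.domLCongr_single _ _ _

lemma free_map_single {S T : Type} (g : S ⟶ T) (a : S) :
    ((ModuleCat.free R).map g).hom (Finsupp.single a 1) = Finsupp.single (g a) 1 :=
  Finsupp.mapDomain_single

lemma chains_d_single (X : TopCat.{0}) (n : ℕ)
    (σ : (TopCat.toSSet.obj X).obj (Opposite.op (SimplexCategory.mk (n + 1)))) :
    (((chains R).obj X).d (n + 1) n).hom (Finsupp.single σ (1 : R)) =
      ∑ i : Fin (n + 2), (-1 : R) ^ (i : ℕ) •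
        Finsupp.single ((TopCat.toSSet.obj X).δ i σ) (1 : R) := by
  let F := ((SimplicialObject.whiskering _ _).obj (ModuleCat.free R)).obj (TopCat.toSSet.obj X)
  have hd : ((chains R).obj X).d (n + 1) n = _ :=
    AlgebraicTopology.AlternatingFaceMapComplex.obj_d_eq F n
  rw [hd]
  change (∑ i : Fin (n + 2), (-1 : ℤ) ^ (i : ℕ) • F.δ i).hom (Finsupp.single σ 1) = _
  rw [ModuleCat.hom_sum]
  refine (LinearMap.sum_apply _ _ _).trans (Finset.sum_congr rfl fun i _ => ?_)
  rw [ModuleCat.hom_zsmul]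
  refine (LinearMap.smul_apply _ _ _).trans ?_
  refine (congrArg (fun y => (-1 : ℤ) ^ (i : ℕ) • y) (free_map_single _ _)).trans ?_
  refine (Int.cast_smul_eq_zsmul R _ _).symm.trans ?_
  rw [Int.cast_pow, Int.cast_neg, Int.cast_one]
  rfl

lemma chainsEquiv_d (X : TopCat.{0}) (n : ℕ) (x : ((chains R).obj X).X (n + 1)) :
    chainsEquiv X n (((chains R).obj X).d (n + 1) n x) = bdry (chainsEquiv X (n + 1) x) := by
  suffices h : (chainsEquiv X n).toLinearMap ∘ₗ (((chains R).obj X).d (n + 1) n).hom =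
      bdry ∘ₗ (chainsEquiv X (n + 1)).toLinearMap from LinearMap.congr_fun h x
  refine Finsupp.lhom_ext' fun σ => LinearMap.ext_ring ?_
  refine (congrArg (chainsEquiv X n) (chains_d_single X n σ)).trans ?_
  refine (map_sum (chainsEquiv X n) _ _).trans ?_
  refine Eq.trans ?_ (congrArg bdry (chainsEquiv_single X (n + 1) σ)).symm
  rw [bdry_single]
  refine Finset.sum_congr rfl fun i _ => ?_
  exact (map_smul (chainsEquiv X n) _ _).trans (congrArg _ (chainsEquiv_single _ _ _))

lemma chainsEquiv_map {X Y : TopCat.{0}} (f : X ⟶ Y) (n : ℕ) (x : ((chains R).obj X).X n) :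
    chainsEquiv Y n (((chains R).map f).f n x) =
      Finsupp.mapDomain (fun σ => f.hom.comp σ) (chainsEquiv X n x) := by
  suffices h : (chainsEquiv Y n).toLinearMap ∘ₗ (((chains R).map f).f n).hom =
      Finsupp.lmapDomain R R (fun σ => f.hom.comp σ) ∘ₗ (chainsEquiv X n).toLinearMap from
    LinearMap.congr_fun h x
  refine Finsupp.lhom_ext' fun σ => LinearMap.ext_ring ?_
  change (chainsEquiv Y n) (((ModuleCat.free R).map ((TopCat.toSSet.map f).app _)).hom
    (Finsupp.single σ 1)) = Finsupp.mapDomain _ (chainsEquiv X n (Finsupp.single σ 1))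
  rw [chainsEquiv_single, Finsupp.mapDomain_single, free_map_single]
  exact chainsEquiv_single _ _ _

lemma mono_chains_map {X Y : TopCat.{0}} (f : X ⟶ Y) (hf : Function.Injective f) :
    Mono ((chains R).map f) := by
  refine HomologicalComplex.mono_of_mono_f _ fun n => ?_
  rw [ModuleCat.mono_iff_injective]
  intro x y hxy
  have h := congrArg (chainsEquiv Y n) hxy
  rw [chainsEquiv_map, chainsEquiv_map] at h
  refine (chainsEquiv X n).injective (Finsupp.mapDomain_injective (fun σ τ h => ?_) h)
  ext t
  exact hf (congrArg (fun g => g t) h)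

section Subspace

variable {X : Type} [TopologicalSpace X] {A B D : Set X}

/-- The inclusion of subspaces as a morphism of spaces. -/
def incl (h : A ⊆ B) : TopCat.of A ⟶ TopCat.of B :=
  TopCat.ofHom ⟨Set.inclusion h, continuous_inclusion h⟩

instance (h : A ⊆ B) : Mono ((chains R).map (incl h)) :=
  mono_chains_map _ (Set.inclusion_injective h)

/-- The inclusion of a subspace in the whole space. -/
def inclVal (A : Set X) : TopCat.of A ⟶ TopCat.of X :=
  TopCat.ofHom ⟨Subtype.val, continuous_subtype_val⟩

instance (A : Set X) : Mono ((chains R).map (inclVal A)) :=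
  mono_chains_map _ Subtype.val_injective

lemma chains_map_incl_comp (h : A ⊆ B) (h' : B ⊆ D) :
    (chains R).map (incl h) ≫ (chains R).map (incl h') = (chains R).map (incl (h.trans h')) :=
  ((chains R).map_comp (incl h) (incl h')).symm

/-- Chains of a subspace, viewed as chains of the ambient space. -/
def subChain (A : Set X) (n : ℕ) :
    ((chains R).obj (TopCat.of A)).X n →ₗ[R] SingularChain R X (n + 1) :=
  (chainsEquiv (TopCat.of X) n).toLinearMap ∘ₗ (((chains R).map (inclVal A)).f n).hom

lemma subChain_injective (A : Set X) (n : ℕ) : Function.Injective (subChain (R := R) A n) :=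
  (chainsEquiv (TopCat.of X) n).injective.comp ((ModuleCat.mono_iff_injective _).1 inferInstance)

lemma subChain_incl (h : A ⊆ B) (n : ℕ) (x : ((chains R).obj (TopCat.of A)).X n) :
    subChain B n (((chains R).map (incl h)).f n x) = subChain A n x := by
  have hcomp : (chains R).map (incl h) ≫ (chains R).map (inclVal B) =
      (chains R).map (inclVal A) := ((chains R).map_comp (incl h) (inclVal B)).symm
  exact congrArg (chainsEquiv (TopCat.of X) n)
    (ConcreteCategory.congr_hom (HomologicalComplex.congr_hom hcomp n) x)

lemma subChain_d (A : Set X) (n : ℕ) (x : ((chains R).obj (TopCat.of A)).X (n + 1)) :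
    subChain A n (((chains R).obj (TopCat.of A)).d (n + 1) n x) = bdry (subChain A (n + 1) x) :=
  (congrArg (chainsEquiv (TopCat.of X) n)
    (ConcreteCategory.congr_hom (((chains R).map (inclVal A)).comm (n + 1) n) x).symm).trans
    (chainsEquiv_d _ _ _)

lemma range_subChain (A : Set X) (n : ℕ) :
    LinearMap.range (subChain (R := R) A n) = smallChains R {A} (n + 1) := by
  have h : subChain A n = Finsupp.lmapDomain R R (fun σ => (inclVal A).hom.comp σ) ∘ₗ
      (chainsEquiv (TopCat.of A) n).toLinearMap :=
    LinearMap.ext fun x => chainsEquiv_map _ _ _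
  rw [h, LinearMap.range_comp, LinearEquiv.range, smallChains, ← Finsupp.supported_univ,
    Finsupp.lmapDomain_supported]
  congr 1
  ext σ
  simp only [Set.image_univ, Set.mem_range, Set.mem_ofPred_eq, Set.mem_singleton_iff,
    exists_eq_left]
  constructor
  · rintro ⟨τ, rfl⟩ _ ⟨t, rfl⟩
    exact (τ t).2
  · exact fun hσ => ⟨⟨fun t => ⟨σ t, hσ ⟨t, rfl⟩⟩, by fun_prop⟩, rfl⟩

end Subspace

end ChainComplex

end SingularChain

/-- `M` is a free `R`-module on `r` generators. Over the zero ring `r` is not determined by `M`. -/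
def IsFreeOfRank (R M : Type*) [CommRing R] [AddCommGroup M] [Module R M] (r : ℕ) : Prop :=
  Nonempty (M ≃ₗ[R] (Fin r → R))

namespace IsFreeOfRank

variable {R M N P : Type*} [CommRing R] [AddCommGroup M] [Module R M] [AddCommGroup N] [Module R N]
  [AddCommGroup P] [Module R P] {r s : ℕ}

lemma congr (e : M ≃ₗ[R] N) : IsFreeOfRank R M r ↔ IsFreeOfRank R N r :=
  ⟨Nonempty.map e.symm.trans, Nonempty.map e.trans⟩

lemma finrank_eq [StrongRankCondition R] (h : IsFreeOfRank R M r) : Module.finrank R M = r := by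
  obtain ⟨e⟩ := h
  rw [e.finrank_eq, Module.finrank_fin_fun]

lemma zero_iff_subsingleton : IsFreeOfRank R M 0 ↔ Subsingleton M :=
  ⟨fun ⟨e⟩ => e.injective.subsingleton, fun _ => ⟨0⟩⟩

lemma finsupp_unique (ι : Type*) [Unique ι] : IsFreeOfRank R (ι →₀ R) 1 :=
  ⟨Finsupp.uniqueLinearEquiv R R (default : ι) ≪≫ₗ (LinearEquiv.funUnique (Fin 1) R R).symm⟩

lemma of_exact {f : M →ₗ[R] N} {g : N →ₗ[R] P} (hf : Function.Injective f)
    (hfg : Function.Exact f g) (hg : Function.Surjective g) (hM : IsFreeOfRank R M r)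
    (hP : IsFreeOfRank R P s) : IsFreeOfRank R N (r + s) := by
  obtain ⟨eM⟩ := hM
  obtain ⟨eP⟩ := hP
  have : Module.Projective R P := .of_equiv eP.symm
  obtain ⟨σ, hσ⟩ := Module.projective_lifting_property g LinearMap.id hg
  obtain ⟨eN, -⟩ := hfg.splitSurjectiveEquiv hf ⟨σ, hσ⟩
  exact ⟨eN ≪≫ₗ eM.prodCongr eP ≪≫ₗ (LinearEquiv.sumArrowLequivProdArrow _ _ R R).symm ≪≫ₗ
    LinearEquiv.funCongrLeft R R finSumFinEquiv.symm⟩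

end IsFreeOfRank

section ModuleCat

variable {R : Type} [CommRing R]

lemma isFreeOfRank_zero_iff_isZero {M : ModuleCat.{0} R} : IsFreeOfRank R M 0 ↔ IsZero M :=
  IsFreeOfRank.zero_iff_subsingleton.trans
    ⟨fun _ => ModuleCat.isZero_of_subsingleton M, ModuleCat.subsingleton_of_isZero⟩

lemma isFreeOfRank_of_shortExact {S : ShortComplex (ModuleCat.{0} R)} (hS : S.ShortExact)
    {r s : ℕ} (h₁ : IsFreeOfRank R S.X₁ r) (h₃ : IsFreeOfRank R S.X₃ s) :
    IsFreeOfRank R S.X₂ (r + s) :=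
  .of_exact hS.moduleCat_injective_f
    ((ShortComplex.ShortExact.moduleCat_exact_iff_function_exact S).1 hS.exact)
    hS.moduleCat_surjective_g h₁ h₃

lemma isFreeOfRank_homology_iff {K L : ChainComplex (ModuleCat.{0} R) ℕ} (f : K ⟶ L) [QuasiIso f]
    {d r : ℕ} : IsFreeOfRank R (K.homology d) r ↔ IsFreeOfRank R (L.homology d) r :=
  IsFreeOfRank.congr (asIso (HomologicalComplex.homologyMap f d)).toLinearEquiv

end ModuleCat

section ChainComplexes

lemma shortExact_cokernel {C ι : Type*} [Category* C] [Abelian C] {c : ComplexShape ι}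
    {A B : HomologicalComplex C c} (i : A ⟶ B) [Mono i] :
    (ShortComplex.mk i (cokernel.π i) (cokernel.condition i)).ShortExact :=
  { exact := ShortComplex.exact_cokernel i
    mono_f := inferInstanceAs (Mono i)
    epi_g := inferInstanceAs (Epi (cokernel.π i)) }

section Abelian

variable {C : Type*} [Category* C] [Abelian C]

lemma quasiIso_of_acyclic {S : ShortComplex (ChainComplex C ℕ)}
    (hS : S.ShortExact) (h : S.X₃.Acyclic) : QuasiIso S.f := by
  refine ⟨fun n => ?_⟩
  rw [quasiIsoAt_iff_isIso_homologyMap]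
  have hz (m : ℕ) : IsZero (S.X₃.homology m) := (h m).isZero_homology
  have : Mono (HomologicalComplex.homologyMap S.f n) :=
    (hS.homology_exact₁ (n + 1) n rfl).mono_g ((hz _).eq_of_src _ _)
  have : Epi (HomologicalComplex.homologyMap S.f n) :=
    (hS.homology_exact₂ n).epi_f ((hz _).eq_of_tgt _ _)
  exact isIso_of_mono_of_epi _

open kernelCokernelCompSequence in
lemma shortExact_cokernel_comp {A B D : C} (i : A ⟶ B) (j : B ⟶ D) [Mono j] :
    (snakeInput i j).L₃.ShortExact :=
  { exact := (snakeInput i j).L₃_exact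
    mono_f := (snakeInput i j).L₂'_exact.mono_g ((isZero_kernel_of_mono j).eq_of_src _ _)
    epi_g :=
      have : Epi (snakeInput i j).L₂.g := inferInstanceAs (Epi biprod.snd)
      (snakeInput i j).epi_L₃_g }

end Abelian

variable {R : Type} [CommRing R] {A B C D : ChainComplex (ModuleCat.{0} R) ℕ}

lemma cokernel_π_surjective (i : A ⟶ B) (n : ℕ) : Function.Surjective ((cokernel.π i).f n) :=
  (ModuleCat.epi_iff_surjective ((cokernel.π i).f n)).1 inferInstance

lemma cokernel_π_eq_zero_iff (i : A ⟶ B) {n : ℕ} (b : B.X n) :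
    (cokernel.π i).f n b = 0 ↔ ∃ a : A.X n, i.f n a = b := by
  have h := (ShortComplex.exact_cokernel i).map (HomologicalComplex.eval _ _ n)
  constructor
  · exact fun hb => (ShortComplex.moduleCat_exact_iff _).1 h b hb
  · rintro ⟨a, rfl⟩
    exact ConcreteCategory.congr_hom (HomologicalComplex.congr_hom (cokernel.condition i) n) a

lemma acyclic_of_epi (p : C ⟶ D) [Epi p]
    (h : ∀ n (z : C.X n), p.f (n - 1) (C.d n (n - 1) z) = 0 →
      ∃ y, p.f n (z - C.d (n + 1) n y) = 0) : D.Acyclic := by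
  intro n
  have hn : (ComplexShape.down ℕ).next n = n - 1 := by cases n <;> simp
  rw [HomologicalComplex.exactAt_iff' D (n + 1) n (n - 1) (by simp) hn,
    ShortComplex.moduleCat_exact_iff]
  intro x hx
  have hp (m : ℕ) : Function.Surjective (p.f m) :=
    (ModuleCat.epi_iff_surjective (p.f m)).1 inferInstance
  obtain ⟨z, rfl⟩ := hp n x
  obtain ⟨y, hy⟩ := h n z ((ConcreteCategory.congr_hom (p.comm n (n - 1)) z).symm.trans hx)
  rw [map_sub, sub_eq_zero] at hy
  exact ⟨p.f (n + 1) y, (ConcreteCategory.congr_hom (p.comm (n + 1) n) y).trans hy.symm⟩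

section CokernelMap

variable {i : A ⟶ B} {j : C ⟶ D} {f : A ⟶ C} {g : B ⟶ D} (w : i ≫ g = f ≫ j)

lemma cokernel_map_π_apply (n : ℕ) (b : B.X n) :
    (cokernel.map i j f g w).f n ((cokernel.π i).f n b) = (cokernel.π j).f n (g.f n b) :=
  ConcreteCategory.congr_hom (HomologicalComplex.congr_hom (cokernel.π_desc i (g ≫ cokernel.π j)
    (by rw [← Category.assoc, w, Category.assoc, cokernel.condition, comp_zero])) n) b

lemma mono_cokernel_map (h : ∀ n (b : B.X n) (c : C.X n), g.f n b = j.f n c → ∃ a, i.f n a = b) :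
    Mono (cokernel.map i j f g w) := by
  refine HomologicalComplex.mono_of_mono_f _ fun n => ?_
  rw [ModuleCat.mono_iff_injective]
  refine (injective_iff_map_eq_zero ((cokernel.map i j f g w).f n).hom).2 fun x hx => ?_
  obtain ⟨b, rfl⟩ := cokernel_π_surjective i n x
  obtain ⟨c, hc⟩ := (cokernel_π_eq_zero_iff j _).1 ((cokernel_map_π_apply w n b).symm.trans hx)
  exact (cokernel_π_eq_zero_iff i b).2 (h n b c hc.symm)

lemma cokernel_π_comp_cokernel_map_π_eq_zero_iff {n : ℕ} (z : D.X n) :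
    (cokernel.π j ≫ cokernel.π (cokernel.map i j f g w)).f n z = 0 ↔
      ∃ b c, g.f n b + j.f n c = z := by
  refine (cokernel_π_eq_zero_iff (cokernel.map i j f g w) ((cokernel.π j).f n z)).trans ⟨?_, ?_⟩
  · rintro ⟨x, hx⟩
    obtain ⟨b, rfl⟩ := cokernel_π_surjective i n x
    rw [cokernel_map_π_apply w n b, eq_comm, ← sub_eq_zero, ← map_sub,
      cokernel_π_eq_zero_iff] at hx
    obtain ⟨c, hc⟩ := hx
    exact ⟨b, c, by rw [hc, add_sub_cancel]⟩
  · rintro ⟨b, c, rfl⟩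
    refine ⟨(cokernel.π i).f n b, (cokernel_map_π_apply w n b).trans ?_⟩
    rw [map_add, (cokernel_π_eq_zero_iff j _).2 ⟨c, rfl⟩, add_zero]

end CokernelMap

end ChainComplexes

namespace SingularChain

open HomologicalComplex

variable {R : Type} [CommRing R]

section Homotopy

variable {X Y : TopCat.{0}}

lemma homologyMap_eq_of_homotopy {f g : X ⟶ Y} (H : TopCat.Homotopy f g) (d : ℕ) :
    homologyMap ((chains R).map f) d = homologyMap ((chains R).map g) d :=
  ((H.toSSet.toSimplicialObjectHomotopy.whiskerRight
    (ModuleCat.free R)).toChainHomotopy).homologyMap_eq d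

lemma homologyMap_endo_of_contractible [ContractibleSpace X] (f : X ⟶ X) (d : ℕ) :
    homologyMap ((chains R).map f) d = 𝟙 _ := by
  obtain ⟨p, ⟨H⟩⟩ := id_nullhomotopic X
  have h_const :
      homologyMap ((chains R).map f) d = homologyMap ((chains R).map (TopCat.const p)) d :=
    homologyMap_eq_of_homotopy (f := f) (g := TopCat.const p)
      (H.comp (ContinuousMap.Homotopy.refl f.hom)) d
  have h_id :
      homologyMap ((chains R).map (𝟙 X)) d = homologyMap ((chains R).map (TopCat.const p)) d :=
    homologyMap_eq_of_homotopy (f := 𝟙 X) (g := TopCat.const p) H d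
  rw [h_const, ← h_id, (chains R).map_id, homologyMap_id]

lemma quasiIso_of_contractible [ContractibleSpace X] [ContractibleSpace Y] (f : X ⟶ Y) :
    QuasiIso ((chains R).map f) := by
  refine ⟨fun d => ?_⟩
  rw [quasiIsoAt_iff_isIso_homologyMap]
  obtain ⟨x⟩ : Nonempty X := inferInstance
  refine ⟨homologyMap ((chains R).map (TopCat.const x)) d, ?_, ?_⟩ <;>
    rw [← homologyMap_comp, ← Functor.map_comp, homologyMap_endo_of_contractible]

/-- The singular chain complex of a point is the complex `⋯ ⟶ R ⟶ R` whose differentials are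
alternately `0` and the identity. -/
def chainsPointIso : (chains R).obj (TopCat.of PUnit.{1}) ≅
    ChainComplex.alternatingConst.obj ((ModuleCat.free R).obj PUnit.{1}) :=
  (AlgebraicTopology.alternatingFaceMapComplex _).mapIso
    (((SimplicialObject.whiskering _ _).obj _).mapIso
    (TopCat.toSSetIsoConst (TopCat.of PUnit.{1})) ≪≫ Functor.constComp _ _ _) ≪≫
    AlgebraicTopology.alternatingFaceMapComplexConst.app _

lemma isFreeOfRank_homology_of_contractible (X : TopCat.{0}) [ContractibleSpace X] (d : ℕ) :
    IsFreeOfRank R (((chains R).obj X).homology d) (if d = 0 then 1 else 0) := by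
  let f : X ⟶ TopCat.of PUnit.{1} := TopCat.const PUnit.unit
  let M := (ModuleCat.free R).obj PUnit.{1}
  have := quasiIso_of_contractible (R := R) f
  rw [isFreeOfRank_homology_iff ((chains R).map f), isFreeOfRank_homology_iff chainsPointIso.hom]
  split_ifs with hd
  · subst hd
    exact (IsFreeOfRank.congr (ChainComplex.alternatingConstHomologyZero M).toLinearEquiv).2
      (.finsupp_unique PUnit)
  · exact isFreeOfRank_zero_iff_isZero.2
      (ChainComplex.alternatingConst_exactAt M d hd).isZero_homology

end Homotopy

section Relative

variable {X : Type} [TopologicalSpace X] {A B D : Set X}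

variable (R) in
/-- The relative singular chain complex of a pair of subspaces. -/
abbrev rel (h : A ⊆ B) : ChainComplex (ModuleCat.{0} R) ℕ := cokernel ((chains R).map (incl h))

variable {X' : Type} [TopologicalSpace X'] {A' B' : Set X'}

variable (R) in
/-- The map of relative singular chain complexes given by a map of pairs. -/
def relMap (h : A ⊆ B) (h' : A' ⊆ B') (f : TopCat.of A ⟶ TopCat.of A')
    (g : TopCat.of B ⟶ TopCat.of B') (w : incl h ≫ g = f ≫ incl h') : rel R h ⟶ rel R h' :=
  cokernel.map _ _ ((chains R).map f) ((chains R).map g) (by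
    rw [← (chains R).map_comp, w, (chains R).map_comp])

lemma quasiIso_relMap (h : A ⊆ B) (h' : A' ⊆ B') (f : TopCat.of A ⟶ TopCat.of A')
    (g : TopCat.of B ⟶ TopCat.of B') (w : incl h ≫ g = f ≫ incl h')
    (hf : QuasiIso ((chains R).map f)) (hg : QuasiIso ((chains R).map g)) :
    QuasiIso (relMap R h h' f g w) := by
  let φ : ShortComplex.mk ((chains R).map (incl h)) _ (cokernel.condition _) ⟶
      ShortComplex.mk ((chains R).map (incl h')) _ (cokernel.condition _) :=
    { τ₁ := (chains R).map f
      τ₂ := (chains R).map g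
      τ₃ := relMap R h h' f g w
      comm₁₂ := by
        dsimp only
        rw [← (chains R).map_comp, ← w, (chains R).map_comp]
      comm₂₃ := by
        dsimp only
        rw [relMap, cokernel.π_desc] }
  exact HomologySequence.quasiIso_τ₃ φ (shortExact_cokernel _) (shortExact_cokernel _) hf hg

lemma isFreeOfRank_rel_of_homeomorph (h : A ⊆ B) (h' : A' ⊆ B') (e : B ≃ₜ B')
    (he : ∀ b : B, (e b : X') ∈ A' ↔ (b : X) ∈ A) {d r : ℕ} :
    IsFreeOfRank R ((rel R h).homology d) r ↔ IsFreeOfRank R ((rel R h').homology d) r := by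
  let f : TopCat.of A ≅ TopCat.of A' :=
    { hom := TopCat.ofHom ⟨fun a => ⟨e ⟨a, h a.2⟩, (he _).2 a.2⟩, by fun_prop⟩
      inv := TopCat.ofHom ⟨fun a => ⟨e.symm ⟨a, h' a.2⟩, (he _).1 (by simp)⟩, by fun_prop⟩
      hom_inv_id := by
        ext a
        simp
      inv_hom_id := by
        ext a
        simp }
  let g : TopCat.of B ≅ TopCat.of B' := TopCat.isoOfHomeo e
  have := quasiIso_relMap (R := R) h h' f.hom g.hom rfl
    (inferInstanceAs (QuasiIso ((chains R).mapIso f).hom))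
    (inferInstanceAs (QuasiIso ((chains R).mapIso g).hom))
  exact isFreeOfRank_homology_iff (relMap R h h' f.hom g.hom rfl)

lemma isFreeOfRank_rel_of_quasiIso_incl_right (h : A ⊆ B) (h' : B ⊆ D)
    (hq : QuasiIso ((chains R).map (incl h'))) {d r : ℕ} :
    IsFreeOfRank R ((rel R h).homology d) r ↔
      IsFreeOfRank R ((rel R (h.trans h')).homology d) r := by
  have : QuasiIso ((chains R).map (𝟙 (TopCat.of A))) := inferInstance
  have := quasiIso_relMap h (h.trans h') (𝟙 _) (incl h') rfl this hq
  exact isFreeOfRank_homology_iff (relMap R h (h.trans h') (𝟙 _) (incl h') rfl)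

variable (R) in
/-- The short exact sequence `0 ⟶ C(B, A) ⟶ C(D, A) ⟶ C(D, B) ⟶ 0` of a triple. -/
def tripleSequence (h : A ⊆ B) (h' : B ⊆ D) : ShortComplex (ChainComplex (ModuleCat.{0} R) ℕ) :=
  (kernelCokernelCompSequence.snakeInput ((chains R).map (incl h)) ((chains R).map (incl h'))).L₃

lemma acyclic_tripleSequence_X₂ (h : A ⊆ B) (h' : B ⊆ D)
    (hq : QuasiIso ((chains R).map (incl (h.trans h')))) : (tripleSequence R h h').X₂.Acyclic := by
  rw [← chains_map_incl_comp h h'] at hq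
  have : Mono ((chains R).map (incl h) ≫ (chains R).map (incl h')) := mono_comp _ _
  exact (shortExact_cokernel ((chains R).map (incl h) ≫ (chains R).map (incl h'))).acyclic_X₃ hq

lemma isFreeOfRank_rel_succ (h : A ⊆ B) (h' : B ⊆ D)
    (hq : QuasiIso ((chains R).map (incl (h.trans h')))) {d r : ℕ} :
    IsFreeOfRank R ((rel R h').homology (d + 1)) r ↔ IsFreeOfRank R ((rel R h).homology d) r := by
  have hS : (tripleSequence R h h').ShortExact := shortExact_cokernel_comp _ _
  have hz (m : ℕ) := (acyclic_tripleSequence_X₂ h h' hq m).isZero_homology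
  exact IsFreeOfRank.congr (hS.δIso (d + 1) d rfl (hz _) (hz _)).toLinearEquiv

lemma isFreeOfRank_rel_zero (h : A ⊆ B) (h' : B ⊆ D)
    (hq : QuasiIso ((chains R).map (incl (h.trans h')))) :
    IsFreeOfRank R ((rel R h').homology 0) 0 := by
  have hS : (tripleSequence R h h').ShortExact := shortExact_cokernel_comp _ _
  have := hS.epi_g
  have hz : IsZero ((tripleSequence R h h').X₂.homology 0) :=
    (acyclic_tripleSequence_X₂ h h' hq 0).isZero_homology
  have h_epi : Epi (homologyMap (tripleSequence R h h').g 0) :=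
    epi_homologyMap_of_epi_of_not_rel (tripleSequence R h h').g 0 (by simp)
  have hz' : IsZero ((tripleSequence R h h').X₃.homology 0) :=
    .of_epi (homologyMap (tripleSequence R h h').g 0) hz
  exact isFreeOfRank_zero_iff_isZero.2 hz'

lemma subChain_mem_smallChains_pair {U V : Set X} {n : ℕ}
    {z : ((chains R).obj (TopCat.of ↑(U ∪ V))).X n} :
    subChain (U ∪ V) n z ∈ smallChains R {U, V} (n + 1) ↔
      ∃ b c, ((chains R).map (incl (Set.subset_union_right : V ⊆ U ∪ V))).f n b +
        ((chains R).map (incl (Set.subset_union_left : U ⊆ U ∪ V))).f n c = z := by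
  have h_sup : smallChains R {U, V} (n + 1) =
      LinearMap.range (subChain V n) ⊔ LinearMap.range (subChain U n) := by
    rw [range_subChain, range_subChain, smallChains, smallChains, smallChains,
      ← Finsupp.supported_union]
    congr 1
    ext σ
    simp [or_comm]
  rw [h_sup, Submodule.mem_sup]
  simp only [LinearMap.mem_range, exists_exists_eq_and]
  refine exists₂_congr fun b c => ?_
  rw [← (subChain_injective (U ∪ V) n).eq_iff, map_add, subChain_incl, subChain_incl]

lemma exists_subChain_inter {U V : Set X} {n : ℕ} {b : ((chains R).obj (TopCat.of V)).X n}
    {c : ((chains R).obj (TopCat.of U)).X n} (h : subChain V n b = subChain U n c) :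
    ∃ a, ((chains R).map (incl (Set.inter_subset_right : U ∩ V ⊆ V))).f n a = b := by
  have hV : subChain V n b ∈ smallChains R {V} (n + 1) := range_subChain (R := R) V n ▸ ⟨b, rfl⟩
  have hU : subChain V n b ∈ smallChains R {U} (n + 1) := range_subChain (R := R) U n ▸ ⟨c, h.symm⟩
  have hUV : subChain V n b ∈ smallChains R {U ∩ V} (n + 1) := by
    simp only [smallChains, Finsupp.mem_supported, Set.subset_def, Set.mem_singleton_iff,
      exists_eq_left, Set.mem_ofPred_eq] at hU hV ⊢
    exact fun σ hσ x hx => ⟨hU σ hσ x hx, hV σ hσ x hx⟩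
  rw [← range_subChain] at hUV
  obtain ⟨a, ha⟩ := hUV
  exact ⟨a, subChain_injective V n ((subChain_incl _ n a).trans ha)⟩

lemma smallChains_zero {𝒰 : Set (Set X)} (h𝒰 : 𝒰.Nonempty) : smallChains R 𝒰 0 = ⊤ := by
  obtain ⟨U, hU⟩ := h𝒰
  rw [smallChains, ← Finsupp.supported_univ]
  congr 1
  refine Set.eq_univ_of_forall fun σ => ⟨U, hU, ?_⟩
  have : IsEmpty (stdSimplex ℝ (Fin 0)) := ⟨fun t => by simpa using t.2.2⟩
  rw [Set.range_eq_empty]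
  exact Set.empty_subset _

lemma exists_subChain_sub_d_mem_smallChains {U V : Set X} (hU : IsOpen U) (hV : IsOpen V) {n : ℕ}
    (z : ((chains R).obj (TopCat.of ↑(U ∪ V))).X n)
    (hz : bdry (subChain (U ∪ V) n z) ∈ smallChains R {U, V} n) :
    ∃ y, subChain (U ∪ V) n (z - ((chains R).obj (TopCat.of ↑(U ∪ V))).d (n + 1) n y) ∈
      smallChains R {U, V} (n + 1) := by
  have h𝒰 : ∀ W ∈ ({U, V} : Set (Set X)), IsOpen W := by
    rintro W (rfl | rfl)
    exacts [hU, hV]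
  obtain ⟨y, hy, hzy⟩ := exists_sub_bdry_mem_smallChains h𝒰
    (x := subChain (U ∪ V) n z) (by rw [Set.sUnion_pair, ← range_subChain]; exact ⟨z, rfl⟩) hz
  rw [Set.sUnion_pair, ← range_subChain] at hy
  obtain ⟨y, rfl⟩ := hy
  exact ⟨y, by rwa [map_sub, subChain_d]⟩

lemma quasiIso_excision {U V : Set X} (hU : IsOpen U) (hV : IsOpen V) :
    QuasiIso (relMap R (Set.inter_subset_right : U ∩ V ⊆ V) (Set.subset_union_left : U ⊆ U ∪ V)
      (incl Set.inter_subset_left) (incl Set.subset_union_right) rfl) := by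
  have w : (chains R).map (incl (Set.inter_subset_right : U ∩ V ⊆ V)) ≫
      (chains R).map (incl (Set.subset_union_right : V ⊆ U ∪ V)) =
      (chains R).map (incl (Set.inter_subset_left : U ∩ V ⊆ U)) ≫
      (chains R).map (incl (Set.subset_union_left : U ⊆ U ∪ V)) := by
    rw [chains_map_incl_comp, chains_map_incl_comp]
  have : Mono (cokernel.map _ _ _ _ w) :=
    mono_cokernel_map w fun n b c hbc => exists_subChain_inter (c := c) (by
      rw [← subChain_incl (Set.subset_union_right : V ⊆ U ∪ V), hbc, subChain_incl])
  refine quasiIso_of_acyclic (shortExact_cokernel (cokernel.map _ _ _ _ w))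
    (acyclic_of_epi (cokernel.π _ ≫ cokernel.π _) fun n z hz => ?_)
  simp only [cokernel_π_comp_cokernel_map_π_eq_zero_iff w, ← subChain_mem_smallChains_pair]
    at hz ⊢
  refine exists_subChain_sub_d_mem_smallChains hU hV z ?_
  rcases n with _ | n
  · rw [smallChains_zero (Set.insert_nonempty U {V})]
    exact Submodule.mem_top
  · rwa [← subChain_d]

/-- In the long exact sequence of the pair `(B, A)` every connecting homomorphism has its source
or its target in odd degree. -/
lemma isFreeOfRank_homology_of_even (h : A ⊆ B) {a b : ℕ → ℕ}
    (hA : ∀ d, IsFreeOfRank R (((chains R).obj (TopCat.of A)).homology d) (a d))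
    (hrel : ∀ d, IsFreeOfRank R ((rel R h).homology d) (b d))
    (ha : ∀ d, Odd d → a d = 0) (hb : ∀ d, Odd d → b d = 0) (d : ℕ) :
    IsFreeOfRank R (((chains R).obj (TopCat.of B)).homology d) (a d + b d) := by
  have hS := shortExact_cokernel ((chains R).map (incl h))
  have hδ (m : ℕ) : hS.δ (m + 1) m rfl = 0 := by
    rcases Nat.even_or_odd m with hm | hm
    · have := hrel (m + 1)
      rw [hb _ hm.add_one] at this
      exact (isFreeOfRank_zero_iff_isZero.1 this).eq_of_src _ _
    · have := hA m
      rw [ha _ hm] at this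
      exact (isFreeOfRank_zero_iff_isZero.1 this).eq_of_tgt _ _
  have hmono : Mono (homologyMap ((chains R).map (incl h)) d) :=
    (hS.homology_exact₁ (d + 1) d rfl).mono_g (hδ d)
  have hepi : Epi (homologyMap (cokernel.π ((chains R).map (incl h))) d) := by
    rcases d with _ | d
    · exact epi_homologyMap_of_epi_of_not_rel _ 0 (by simp)
    · exact (hS.homology_exact₃ (d + 1) d rfl).epi_f (hδ d)
  exact isFreeOfRank_of_shortExact
    { exact := hS.homology_exact₂ d
      mono_f := hmono
      epi_g := hepi } (hA d) (hrel d)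

end Relative

section Pairs

variable {X : Type} [TopologicalSpace X]

lemma isFreeOfRank_rel_congr {A A' B B' : Set X} {h : A ⊆ B} {h' : A' ⊆ B'} (hA : A = A')
    (hB : B = B') {d r : ℕ} :
    IsFreeOfRank R ((rel R h).homology d) r ↔ IsFreeOfRank R ((rel R h').homology d) r := by
  subst hA hB
  rfl

lemma isFreeOfRank_rel_excision {U V : Set X} (hU : IsOpen U) (hV : IsOpen V) {d r : ℕ} :
    IsFreeOfRank R ((rel R (Set.subset_union_left : U ⊆ U ∪ V)).homology d) r ↔
      IsFreeOfRank R ((rel R (Set.inter_subset_right : U ∩ V ⊆ V)).homology d) r := by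
  have := quasiIso_excision (R := R) hU hV
  exact (isFreeOfRank_homology_iff (relMap R (Set.inter_subset_right : U ∩ V ⊆ V)
    (Set.subset_union_left : U ⊆ U ∪ V) (incl Set.inter_subset_left)
    (incl Set.subset_union_right) rfl)).symm

lemma isFreeOfRank_rel_union_succ {U V D : Set X} (hU : IsOpen U) (hV : IsOpen V) (hD : U ∪ V ⊆ D)
    (hUD : QuasiIso ((chains R).map (incl (Set.subset_union_left.trans hD : U ⊆ D))))
    (hVD : QuasiIso ((chains R).map (incl (Set.subset_union_right.trans hD : V ⊆ D)))) {d r : ℕ} :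
    IsFreeOfRank R ((rel R hD).homology (d + 1)) r ↔
      IsFreeOfRank R ((rel R ((Set.inter_subset_left.trans Set.subset_union_left).trans hD :
        U ∩ V ⊆ D)).homology d) r := by
  rw [isFreeOfRank_rel_succ Set.subset_union_left hD hUD, isFreeOfRank_rel_excision hU hV,
    isFreeOfRank_rel_of_quasiIso_incl_right _ _ hVD]

lemma isZero_chains_of_isEmpty (Y : TopCat.{0}) [IsEmpty Y] : IsZero ((chains R).obj Y) := by
  rw [IsZero.iff_id_eq_zero]
  ext n x
  apply (chainsEquiv _ n).injective
  have : IsEmpty C(stdSimplex ℝ (Fin (n + 1)), Y) :=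
    ⟨fun σ => isEmptyElim (σ (stdSimplex.vertex 0))⟩
  exact Subsingleton.elim _ _

lemma isFreeOfRank_homology_of_isEmpty (Y : TopCat.{0}) [IsEmpty Y] (d : ℕ) :
    IsFreeOfRank R (((chains R).obj Y).homology d) 0 :=
  isFreeOfRank_zero_iff_isZero.2 ((HomologicalComplex.homologyFunctor _ _ d).map_isZero
    (isZero_chains_of_isEmpty Y))

lemma isFreeOfRank_rel_of_isEmpty {A B : Set X} (h : A ⊆ B) [IsEmpty A] {d r : ℕ} :
    IsFreeOfRank R ((rel R h).homology d) r ↔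
      IsFreeOfRank R (((chains R).obj (TopCat.of B)).homology d) r := by
  have : IsEmpty (TopCat.of A) := ‹_›
  have h0 : (chains R).map (incl h) = 0 := (isZero_chains_of_isEmpty (TopCat.of A)).eq_of_src _ _
  have : IsIso (cokernel.π ((chains R).map (incl h))) := by
    rw [h0]
    infer_instance
  exact (isFreeOfRank_homology_iff (cokernel.π ((chains R).map (incl h)))).symm

end Pairs

section NonzeroLocus

variable {E ι : Type} [AddCommGroup E] [Module ℝ E] [TopologicalSpace E]

/-- The points at which one of the functionals indexed by `S` does not vanish: the complement of
a subspace. -/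
def nonzeroLocus (φ : ι → E →L[ℝ] ℝ) (S : Finset ι) : Set E := {x | ∃ i ∈ S, φ i x ≠ 0}

/-- The points at which `φ a` has the sign of `ε` or one of the functionals indexed by `S` does
not vanish. The two half loci `ε = ±1` cover the nonzero locus of `insert a S`. -/
def halfLocus (φ : ι → E →L[ℝ] ℝ) (S : Finset ι) (a : ι) (ε : ℝ) : Set E :=
  {x | 0 < ε * φ a x} ∪ nonzeroLocus φ S

variable {φ : ι → E →L[ℝ] ℝ}

lemma nonzeroLocus_empty : nonzeroLocus φ ∅ = ∅ := by
  simp [nonzeroLocus]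

lemma isOpen_nonzeroLocus (S : Finset ι) : IsOpen (nonzeroLocus φ S) := by
  have h : nonzeroLocus φ S = ⋃ i ∈ S, {x | φ i x ≠ 0} := by
    ext x
    simp [nonzeroLocus]
  rw [h]
  exact isOpen_biUnion fun i _ => isOpen_ne_fun (φ i).continuous continuous_const

lemma isOpen_halfLocus (S : Finset ι) (a : ι) (ε : ℝ) : IsOpen (halfLocus φ S a ε) :=
  (isOpen_lt continuous_const (by fun_prop)).union (isOpen_nonzeroLocus S)

lemma halfLocus_inter (S : Finset ι) (a : ι) :
    halfLocus φ S a (-1) ∩ halfLocus φ S a 1 = nonzeroLocus φ S := by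
  ext x
  simp only [halfLocus, Set.mem_union, Set.mem_inter_iff, Set.mem_ofPred_eq, neg_mul, one_mul,
    neg_pos]
  constructor
  · rintro ⟨h | h, h' | h'⟩
    · exact absurd h h'.not_gt
    all_goals assumption
  · exact fun h => ⟨Or.inr h, Or.inr h⟩

variable [DecidableEq ι]

lemma halfLocus_union (S : Finset ι) (a : ι) :
    halfLocus φ S a (-1) ∪ halfLocus φ S a 1 = nonzeroLocus φ (insert a S) := by
  ext x
  simp only [halfLocus, nonzeroLocus, Set.mem_union, Set.mem_ofPred_eq, Finset.mem_insert,
    exists_eq_or_imp, ne_iff_lt_or_gt (a := φ a x), neg_mul, one_mul, neg_pos]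
  tauto

variable {e : ι → E} (he : ∀ i j, φ i (e j) = if i = j then 1 else 0) {S : Finset ι} {a : ι}
  (ha : a ∉ S)

include he ha in
lemma starConvex_halfLocus {ε : ℝ} (hε : ε * ε = 1) :
    StarConvex ℝ (ε • e a) (halfLocus φ S a ε) := by
  intro y hy s t hs ht hst
  have h_sign : ε * φ a (s • ε • e a + t • y) = s + t * (ε * φ a y) := by
    simp only [map_add, map_smul, he, if_true, smul_eq_mul, mul_one]
    linear_combination s * hε
  rcases ht.eq_or_lt with rfl | ht
  · left
    rw [Set.mem_ofPred_eq, h_sign]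
    linarith
  · rcases hy with hy | ⟨i, hi, hy⟩
    · left
      rw [Set.mem_ofPred_eq, h_sign]
      have := mul_pos ht hy
      linarith
    · right
      refine ⟨i, hi, ?_⟩
      have hia : i ≠ a := fun h => ha (h ▸ hi)
      simp only [map_add, map_smul, he, if_neg hia, smul_eq_mul, mul_zero, zero_add]
      exact mul_ne_zero ht.ne' hy

variable [ContinuousAdd E] [ContinuousSMul ℝ E]

include he ha in
lemma contractibleSpace_halfLocus {ε : ℝ} (hε : ε * ε = 1) :
    ContractibleSpace (halfLocus φ S a ε) := by
  refine (starConvex_halfLocus he ha hε).contractibleSpace ⟨ε • e a, Or.inl ?_⟩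
  simp [he, hε]

omit [DecidableEq ι] in
lemma contractibleSpace_univ : ContractibleSpace (Set.univ : Set E) :=
  (starConvex_univ (0 : E) : StarConvex ℝ _ _).contractibleSpace ⟨0, trivial⟩

include he ha in
lemma quasiIso_incl_halfLocus {ε : ℝ} (hε : ε * ε = 1) :
    QuasiIso ((chains R).map (incl (Set.subset_univ (halfLocus φ S a ε)))) := by
  have : ContractibleSpace (TopCat.of (halfLocus φ S a ε)) := contractibleSpace_halfLocus he ha hε
  have : ContractibleSpace (TopCat.of (Set.univ : Set E)) := contractibleSpace_univ
  exact quasiIso_of_contractible _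

include he ha in
lemma isFreeOfRank_rel_nonzeroLocus_insert_succ {d r : ℕ} :
    IsFreeOfRank R ((rel R (Set.subset_univ (nonzeroLocus φ (insert a S)))).homology (d + 1)) r ↔
      IsFreeOfRank R ((rel R (Set.subset_univ (nonzeroLocus φ S))).homology d) r := by
  rw [isFreeOfRank_rel_congr (h' := Set.subset_univ _) (halfLocus_union S a).symm rfl,
    isFreeOfRank_rel_union_succ (isOpen_halfLocus S a (-1)) (isOpen_halfLocus S a 1) _
      (quasiIso_incl_halfLocus he ha (by norm_num)) (quasiIso_incl_halfLocus he ha (by norm_num)),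
    isFreeOfRank_rel_congr (halfLocus_inter S a) rfl]

include he ha in
lemma isFreeOfRank_rel_nonzeroLocus_insert_zero :
    IsFreeOfRank R ((rel R (Set.subset_univ (nonzeroLocus φ (insert a S)))).homology 0) 0 := by
  rw [isFreeOfRank_rel_congr (h' := Set.subset_univ _) (halfLocus_union S a).symm rfl]
  exact isFreeOfRank_rel_zero Set.subset_union_left _
    (quasiIso_incl_halfLocus he ha (by norm_num))

include he in
lemma isFreeOfRank_rel_nonzeroLocus (S : Finset ι) (d : ℕ) :
    IsFreeOfRank R ((rel R (Set.subset_univ (nonzeroLocus φ S))).homology d)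
      (if d = S.card then 1 else 0) := by
  induction S using Finset.induction_on generalizing d with
  | empty =>
    have : ContractibleSpace (TopCat.of (Set.univ : Set E)) := contractibleSpace_univ
    have : IsEmpty (nonzeroLocus φ ∅) := by
      rw [nonzeroLocus_empty]
      infer_instance
    rw [isFreeOfRank_rel_of_isEmpty]
    exact isFreeOfRank_homology_of_contractible _ d
  | insert a S ha ih =>
    rw [Finset.card_insert_of_notMem ha]
    rcases d with _ | d
    · exact isFreeOfRank_rel_nonzeroLocus_insert_zero he ha
    · simpa only [Nat.add_right_cancel_iff] using
        (isFreeOfRank_rel_nonzeroLocus_insert_succ he ha).2 (ih d)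

end NonzeroLocus

end SingularChain

section Projection

open scoped Matrix

section StarField

variable {K ν κ : Type*} [Field K] [StarRing K] [Fintype ν] [Fintype κ] [DecidableEq κ]

/-- The orthogonal projection onto the column space of a matrix with independent columns. -/
def orthProj (B : Matrix ν κ K) : Matrix ν ν K := B * (Bᴴ * B)⁻¹ * Bᴴ

lemma orthProj_mul_self {B : Matrix ν κ K} (hB : IsUnit (Bᴴ * B).det) : orthProj B * B = B := by
  rw [orthProj, Matrix.mul_assoc, Matrix.mul_assoc, Matrix.nonsing_inv_mul _ hB, Matrix.mul_one]

lemma orthProj_mul_orthProj {B : Matrix ν κ K} (hB : IsUnit (Bᴴ * B).det) :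
    orthProj B * orthProj B = orthProj B := by
  nth_rewrite 2 [orthProj]
  rw [Matrix.mul_assoc B, ← Matrix.mul_assoc (orthProj B), orthProj_mul_self hB,
    ← Matrix.mul_assoc, orthProj]

lemma conjTranspose_orthProj (B : Matrix ν κ K) : (orthProj B)ᴴ = orthProj B := by
  simp [orthProj, Matrix.conjTranspose_nonsing_inv, Matrix.mul_assoc]

lemma trace_orthProj {B : Matrix ν κ K} (hB : IsUnit (Bᴴ * B).det) :
    (orthProj B).trace = Fintype.card κ := by
  rw [orthProj, Matrix.trace_mul_comm, ← Matrix.mul_assoc, Matrix.mul_nonsing_inv _ hB,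
    Matrix.trace_one]

lemma orthProj_submatrix (B : Matrix ν κ K) {μ ρ : Type*} (s : μ → ν) (t : ρ → ν) :
    (orthProj B).submatrix s t = B.submatrix s id * (Bᴴ * B)⁻¹ * (B.submatrix t id)ᴴ := rfl

lemma det_submatrix_orthProj_ne_zero {B : Matrix ν κ K} (hB : IsUnit (Bᴴ * B).det) (s : κ → ν) :
    ((orthProj B).submatrix s s).det ≠ 0 ↔ (B.submatrix s id).det ≠ 0 := by
  have h := (Matrix.isUnit_nonsing_inv_det _ hB).ne_zero
  rw [orthProj_submatrix, Matrix.det_mul, Matrix.det_mul, Matrix.det_conjTranspose]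
  simp only [ne_eq, mul_eq_zero, h, star_eq_zero, or_false, or_self]

end StarField

section Echelon

variable {K ν κ : Type*} [Field K] [Fintype κ] [DecidableEq κ]

/-- The matrix spanning the range of `P` whose rows selected by `f` form the identity matrix. -/
def echelon (f : κ → ν) (P : Matrix ν ν K) : Matrix ν κ K :=
  P.submatrix id f * (P.submatrix f f)⁻¹

lemma echelon_submatrix {f : κ → ν} {P : Matrix ν ν K} (hf : (P.submatrix f f).det ≠ 0) :
    (echelon f P).submatrix f id = 1 := by
  rw [echelon, Matrix.submatrix_mul _ _ _ id _ Function.bijective_id, Matrix.submatrix_submatrix,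
    Matrix.submatrix_id_id]
  exact Matrix.mul_nonsing_inv _ (isUnit_iff_ne_zero.2 hf)

lemma mul_echelon [Fintype ν] {P : Matrix ν ν K} (hP : P * P = P) (f : κ → ν) :
    P * echelon f P = echelon f P := by
  have h : P * P.submatrix id f = P.submatrix id f := congrArg (Matrix.submatrix · id f) hP
  rw [echelon, ← Matrix.mul_assoc, h]

lemma echelon_orthProj [StarRing K] [Fintype ν] {B : Matrix ν κ K} {f : κ → ν}
    (hf : B.submatrix f id = 1) (hB : IsUnit (Bᴴ * B).det) : echelon f (orthProj B) = B := by
  rw [echelon, orthProj_submatrix, orthProj_submatrix, hf]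
  simp [Matrix.mul_assoc, Matrix.nonsing_inv_nonsing_inv _ hB, Matrix.nonsing_inv_mul _ hB]

end Echelon

section RCLike

open scoped ComplexOrder

variable {𝕜 ν κ : Type*} [RCLike 𝕜] [Fintype ν] [Fintype κ]

lemma isUnit_det_gram [DecidableEq κ] {B : Matrix ν κ 𝕜} {f : κ → ν}
    (hB : B.submatrix f id = 1) : IsUnit (Bᴴ * B).det := by
  have hinj : Function.Injective B.mulVec := by
    intro v w hvw
    have h (u : κ → 𝕜) : (B *ᵥ u) ∘ f = u := by
      conv_rhs => rw [← Matrix.one_mulVec u, ← hB]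
      rfl
    rw [← h v, ← h w]
    exact congrArg (· ∘ f) hvw
  exact (Matrix.isUnit_iff_isUnit_det _).1 (Matrix.PosDef.conjTranspose_mul_self B hinj).isUnit

lemma eq_of_mul_eq_of_trace_eq {P Q : Matrix ν ν 𝕜} (hP : P * P = P) (hP' : Pᴴ = P)
    (hQ : Q * Q = Q) (hQ' : Qᴴ = Q) (hPQ : P * Q = Q) (htr : P.trace = Q.trace) : P = Q := by
  have hQP : Q * P = Q := by
    rw [← hP', ← hQ', ← Matrix.conjTranspose_mul, hPQ]
  have h : (P - Q)ᴴ * (P - Q) = P - Q := by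
    rw [Matrix.conjTranspose_sub, hP', hQ', mul_sub, sub_mul, sub_mul, hP, hQ, hPQ, hQP]
    simp
  rw [← sub_eq_zero, ← Matrix.trace_conjTranspose_mul_self_eq_zero_iff, h, Matrix.trace_sub, htr,
    sub_self]

lemma orthProj_echelon [DecidableEq κ] {f : κ → ν} {P : Matrix ν ν 𝕜} (hP : P * P = P)
    (hP' : Pᴴ = P) (htr : P.trace = Fintype.card κ) (hf : (P.submatrix f f).det ≠ 0) :
    orthProj (echelon f P) = P := by
  have hB := isUnit_det_gram (echelon_submatrix hf)
  refine (eq_of_mul_eq_of_trace_eq hP hP' (orthProj_mul_orthProj hB) (conjTranspose_orthProj _)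
    ?_ (htr.trans (trace_orthProj hB).symm)).symm
  rw [orthProj, ← Matrix.mul_assoc, ← Matrix.mul_assoc, mul_echelon hP]

end RCLike

lemma rank_eq_of_mul_self_of_trace_eq {K ν : Type*} [Fintype ν] [Field K] [CharZero K]
    {P : Matrix ν ν K} (hP : P * P = P) {k : ℕ} (htr : P.trace = k) : P.rank = k := by
  classical
  have h : IsIdempotentElem (Matrix.toLin' P) := by
    rw [IsIdempotentElem, Module.End.mul_eq_comp, ← Matrix.toLin'_mul, hP]
  have h_trace := (LinearMap.IsIdempotentElem.isProj_range _ h).trace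
  rw [Matrix.trace_toLin'_eq, htr] at h_trace
  exact_mod_cast h_trace.symm

lemma exists_card_eq_rank_linearIndepOn_row {K ν ι : Type*} [Field K] [Finite ν] [Fintype ι]
    (P : Matrix ν ι K) : ∃ I : Finset ν, I.card = P.rank ∧ LinearIndepOn K P.row (I : Set ν) := by
  classical
  have := Fintype.ofFinite ν
  obtain ⟨s, -, -, hspan, hs⟩ := exists_linearIndepOn_extension
    (linearIndepOn_empty K P.row) (Set.empty_subset Set.univ)
  have hs' : Submodule.span K (P.row '' s) = Submodule.span K (Set.range P.row) :=
    le_antisymm (Submodule.span_mono (Set.image_subset_range _ _))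
      (Submodule.span_le.2 (Set.image_univ ▸ hspan))
  refine ⟨s.toFinset, ?_, by rwa [Set.coe_toFinset]⟩
  rw [Matrix.rank_eq_finrank_span_row, ← hs', Set.image_eq_range, finrank_span_eq_card hs,
    Set.toFinset_card]

open scoped ComplexOrder in
lemma exists_det_submatrix_ne_zero {𝕜 ν : Type*} [RCLike 𝕜] [Fintype ν] [DecidableEq ν]
    {P : Matrix ν ν 𝕜} (hP : P * P = P) (hP' : Pᴴ = P) {k : ℕ} (htr : P.trace = k) :
    ∃ I : Finset ν, I.card = k ∧ (P.submatrix ((↑) : I → ν) (↑)).det ≠ 0 := by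
  obtain ⟨I, hI, hrow⟩ := exists_card_eq_rank_linearIndepOn_row P
  refine ⟨I, hI.trans (rank_eq_of_mul_self_of_trace_eq hP htr), ?_⟩
  let B : Matrix I ν 𝕜 := P.submatrix (↑) id
  have hminor : P.submatrix ((↑) : I → ν) (↑) = B * Bᴴ := by
    conv_lhs => rw [← hP]
    nth_rewrite 2 [← hP']
    rfl
  rw [hminor]
  exact (Matrix.PosDef.mul_conjTranspose_self B (Matrix.vecMul_injective_iff.2 hrow)).det_pos.ne'

end Projection

lemma continuous_matrix_nonsing_inv {X κ K : Type*} [TopologicalSpace X] [Fintype κ]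
    [DecidableEq κ] [Field K] [TopologicalSpace K] [IsTopologicalRing K] [ContinuousInv₀ K]
    {A : X → Matrix κ κ K} (hA : Continuous A) (hdet : ∀ x, (A x).det ≠ 0) :
    Continuous fun x => (A x)⁻¹ := by
  simp only [Matrix.inv_def, Ring.inverse_eq_inv']
  exact (hA.matrix_det.inv₀ hdet).smul hA.matrix_adjugate

namespace Gr

open scoped Matrix

section Cell

variable {k n : ℕ} (I : Finset (Fin n))

/-- The positions of the free entries of a reduced echelon matrix with pivot rows `I`. -/
abbrev Entry : Type := {p : Fin n × I // p.1 ∉ I}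

/-- The matrix with the prescribed free entries and the identity matrix in the rows `I`. -/
def cellMatrix (z : Entry I → ℂ) : Matrix (Fin n) I ℂ :=
  fun j a => if h : j ∈ I then (if j = a then 1 else 0) else z ⟨(j, a), h⟩

variable {I}

lemma cellMatrix_apply_coe (z : Entry I → ℂ) (a b : I) :
    cellMatrix I z a b = (1 : Matrix I I ℂ) a b := by
  rw [cellMatrix, dif_pos a.2, Matrix.one_apply]
  exact if_congr Subtype.coe_inj rfl rfl

lemma cellMatrix_apply_entry (z : Entry I → ℂ) (p : Entry I) :
    cellMatrix I z p.1.1 p.1.2 = z p :=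
  dif_neg p.2

lemma cellMatrix_submatrix (z : Entry I → ℂ) :
    (cellMatrix I z).submatrix ((↑) : I → Fin n) id = 1 := by
  ext a b
  exact cellMatrix_apply_coe z a b

lemma cellMatrix_entries {B : Matrix (Fin n) I ℂ} (hB : B.submatrix ((↑) : I → Fin n) id = 1) :
    cellMatrix I (fun p => B p.1.1 p.1.2) = B := by
  ext j a
  by_cases hj : j ∈ I
  · exact (cellMatrix_apply_coe _ ⟨j, hj⟩ a).trans (congrFun₂ hB ⟨j, hj⟩ a).symm
  · exact cellMatrix_apply_entry _ ⟨(j, a), hj⟩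

lemma continuous_cellMatrix : Continuous (cellMatrix I) := by
  refine continuous_matrix fun j a => ?_
  unfold cellMatrix
  split_ifs <;> fun_prop

lemma isUnit_det_cellMatrix_gram (z : Entry I → ℂ) :
    IsUnit ((cellMatrix I z)ᴴ * cellMatrix I z).det :=
  isUnit_det_gram (cellMatrix_submatrix z)

lemma continuous_orthProj_cellMatrix :
    Continuous fun z : Entry I → ℂ => orthProj (cellMatrix I z) := by
  have h := continuous_cellMatrix (I := I)
  exact (h.matrix_mul (continuous_matrix_nonsing_inv (h.matrix_conjTranspose.matrix_mul h)
    fun z => (isUnit_det_cellMatrix_gram z).ne_zero)).matrix_mul h.matrix_conjTranspose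

variable (k I)

/-- The projections whose principal minor at `I` does not vanish: the subspaces that project
isomorphically to the coordinates in `I`. -/
def bigCell : Set (Gr k n) := {P | (P.1.submatrix ((↑) : I → Fin n) (↑)).det ≠ 0}

variable {k I}

lemma continuous_val : Continuous (fun P : Gr k n => P.1) := continuous_subtype_val

lemma isOpen_bigCell : IsOpen (bigCell k I) :=
  isOpen_ne_fun (continuous_val.matrix_submatrix _ _).matrix_det continuous_const

/-- The orthogonal projection onto the column space of a reduced echelon matrix with pivot rows
`I`. -/
def cellProj (hI : I.card = k) (z : Entry I → ℂ) : Gr k n :=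
  ⟨orthProj (cellMatrix I z), orthProj_mul_orthProj (isUnit_det_cellMatrix_gram z),
    conjTranspose_orthProj _, by
      rw [trace_orthProj (isUnit_det_cellMatrix_gram z), Fintype.card_coe, hI]⟩

lemma cellProj_mem_bigCell_iff (hI : I.card = k) (z : Entry I → ℂ) {J : Finset (Fin n)}
    (e : I ≃ J) :
    cellProj hI z ∈ bigCell k J ↔
      ((cellMatrix I z).submatrix (fun a => (e a : Fin n)) id).det ≠ 0 := by
  rw [← det_submatrix_orthProj_ne_zero (isUnit_det_cellMatrix_gram z)]
  exact not_congr (Eq.congr_left (Matrix.det_submatrix_equiv_self e _).symm)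

lemma cellProj_mem_bigCell (hI : I.card = k) (z : Entry I → ℂ) : cellProj hI z ∈ bigCell k I := by
  rw [cellProj_mem_bigCell_iff hI z (Equiv.refl I)]
  simp [cellMatrix_submatrix]

/-- The coordinates of a big cell: the free entries of the reduced echelon matrix spanning the
subspace. -/
def chart (hI : I.card = k) : bigCell k I ≃ₜ (Entry I → ℂ) where
  toFun P p := echelon ((↑) : I → Fin n) P.1.1 p.1.1 p.1.2
  invFun z := ⟨cellProj hI z, cellProj_mem_bigCell hI z⟩
  left_inv P := by
    refine Subtype.ext (Subtype.ext ?_)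
    change orthProj (cellMatrix I _) = P.1.1
    obtain ⟨h_idem, h_symm, h_trace⟩ := P.1.2
    rw [cellMatrix_entries (echelon_submatrix P.2),
      orthProj_echelon h_idem h_symm (by rw [h_trace, Fintype.card_coe, hI]) P.2]
  right_inv z := by
    funext p
    change echelon _ (orthProj (cellMatrix I z)) p.1.1 p.1.2 = z p
    rw [echelon_orthProj (cellMatrix_submatrix z) (isUnit_det_cellMatrix_gram z),
      cellMatrix_apply_entry]
  continuous_toFun := by
    have h : Continuous fun P : bigCell k I => P.1.1 := continuous_val.comp continuous_subtype_val
    have h_echelon : Continuous fun P : bigCell k I => echelon ((↑) : I → Fin n) P.1.1 :=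
      (h.matrix_submatrix _ _).matrix_mul
        (continuous_matrix_nonsing_inv (h.matrix_submatrix _ _) fun P => P.2)
    exact continuous_pi fun p => h_echelon.matrix_elem _ _
  continuous_invFun :=
    (continuous_orthProj_cellMatrix.subtype_mk _).subtype_mk _

end Cell

section Weight

variable {k n : ℕ} {I J : Finset (Fin n)}

/-- The binary expansion with digits `I`, defining a total order on subsets that refines the
Bruhat order. -/
def weight (I : Finset (Fin n)) : ℕ := ∑ i ∈ I, 2 ^ (i : ℕ)

lemma weight_injective : Function.Injective (weight (n := n)) := by
  intro I J h
  refine Finset.map_injective Fin.valEmbedding (Finset.geomSum_injective le_rfl ?_)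
  simpa [weight] using h

lemma weight_mono : Monotone (weight (n := n)) := fun _ _ h => Finset.sum_le_sum_of_subset h

lemma weight_eq_sum_of_equiv (e : I ≃ J) : weight J = ∑ a : I, 2 ^ ((e a : Fin n) : ℕ) := by
  rw [weight, ← Finset.sum_coe_sort]
  exact (e.sum_comp fun j : J => 2 ^ ((j : Fin n) : ℕ)).symm

lemma weight_le_of_forall_le (e : I ≃ J) (h : ∀ a : I, (a : Fin n) ≤ e a) :
    weight I ≤ weight J := by
  rw [weight_eq_sum_of_equiv e, weight, ← Finset.sum_coe_sort]
  exact Finset.sum_le_sum fun a _ => Nat.pow_le_pow_right two_pos (h a)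

lemma exists_equiv_update {j : Fin n} (hj : j ∉ I) (a : I) :
    ∃ (J : Finset (Fin n)) (e : I ≃ J), ∀ b, (e b : Fin n) = Function.update Subtype.val a j b := by
  let s : I → Fin n := Function.update Subtype.val a j
  have hs : Function.Injective s := by
    intro b c h
    by_cases hb : b = a <;> by_cases hc : c = a <;>
      simp only [s, Function.update_apply, hb, hc, if_true, if_false] at h
    · rw [hb, hc]
    · exact absurd (h ▸ c.2) hj
    · exact absurd (h ▸ b.2) hj
    · exact Subtype.ext h
  exact ⟨Finset.univ.image s, (Equiv.ofInjective s hs).trans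
    (Equiv.subtypeEquivRight fun j => by simp), fun b => rfl⟩

lemma weight_lt_of_update {j : Fin n} {a : I} (hja : j < a) {e : I ≃ J}
    (he : ∀ b, (e b : Fin n) = Function.update Subtype.val a j b) : weight J < weight I := by
  have h_le (b : I) : (e b : Fin n) ≤ b := by
    rw [he, Function.update_apply]
    split_ifs with hb
    exacts [hb ▸ hja.le, le_rfl]
  rw [weight_eq_sum_of_equiv e, weight, ← Finset.sum_coe_sort I]
  refine Finset.sum_lt_sum (fun b _ => Nat.pow_le_pow_right two_pos (h_le b))
    ⟨a, Finset.mem_univ a, Nat.pow_lt_pow_right one_lt_two ?_⟩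
  rwa [he, Function.update_self]

/-- The `k`-element subsets of weight less than `m`. -/
def subsetsBelow (k n m : ℕ) : Finset (Finset (Fin n)) :=
  {J | J.card = k ∧ weight J < m}

lemma mem_subsetsBelow {m : ℕ} : J ∈ subsetsBelow k n m ↔ J.card = k ∧ weight J < m :=
  Finset.mem_filter_univ J

lemma notMem_subsetsBelow_weight : I ∉ subsetsBelow k n (weight I) :=
  fun h => lt_irrefl _ (mem_subsetsBelow.1 h).2

lemma subsetsBelow_zero : subsetsBelow k n 0 = ∅ := by
  simp [subsetsBelow]

lemma subsetsBelow_weight_succ (hI : I.card = k) :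
    subsetsBelow k n (weight I + 1) = insert I (subsetsBelow k n (weight I)) := by
  ext J
  rw [Finset.mem_insert, mem_subsetsBelow, mem_subsetsBelow, Nat.lt_succ_iff_lt_or_eq,
    weight_injective.eq_iff, and_or_left, or_comm]
  exact or_congr_left (and_iff_right_of_imp fun h => h ▸ hI)

lemma subsetsBelow_succ_of_forall_ne {m : ℕ}
    (h : ∀ I : Finset (Fin n), I.card = k → weight I ≠ m) :
    subsetsBelow k n (m + 1) = subsetsBelow k n m := by
  ext J
  rw [mem_subsetsBelow, mem_subsetsBelow, Nat.lt_succ_iff_lt_or_eq]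
  exact and_congr_right fun hJ => or_iff_left (h J hJ)

lemma subsetsBelow_weight_univ_succ :
    subsetsBelow k n (weight (Finset.univ : Finset (Fin n)) + 1) =
      Finset.powersetCard k Finset.univ := by
  ext J
  rw [mem_subsetsBelow, Finset.mem_powersetCard_univ]
  exact and_iff_left (Nat.lt_succ_of_le (weight_mono (Finset.subset_univ J)))

end Weight

section Lower

variable {k n : ℕ} {I J : Finset (Fin n)}

lemma le_of_cellMatrix_ne_zero {z : Entry I → ℂ} (hz : ∀ p : Entry I, p.1.1 < p.1.2 → z p = 0)
    {j : Fin n} {a : I} (h : cellMatrix I z j a ≠ 0) : (a : Fin n) ≤ j := by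
  by_contra! hlt
  by_cases hj : j ∈ I
  · exact h ((cellMatrix_apply_coe z ⟨j, hj⟩ a).trans
      (Matrix.one_apply_ne fun h => hlt.ne (congrArg Subtype.val h)))
  · exact h ((cellMatrix_apply_entry z ⟨(j, a), hj⟩).trans (hz _ hlt))

lemma exists_lt_of_cellProj_mem_bigCell (hI : I.card = k) (hJ : J.card = k)
    (hw : weight J < weight I) {z : Entry I → ℂ} (hz : cellProj hI z ∈ bigCell k J) :
    ∃ p : Entry I, p.1.1 < p.1.2 ∧ z p ≠ 0 := by
  by_contra! hz0
  let e : I ≃ J := Finset.equivOfCardEq (hI.trans hJ.symm)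
  rw [cellProj_mem_bigCell_iff hI z e, Matrix.det_apply] at hz
  obtain ⟨σ, -, hσ⟩ := Finset.exists_ne_zero_of_sum_ne_zero hz
  have hprod := Finset.prod_ne_zero_iff.1 (right_ne_zero_of_smul hσ)
  exact hw.not_ge (weight_le_of_forall_le (σ.trans e) fun a =>
    le_of_cellMatrix_ne_zero hz0 (hprod a (Finset.mem_univ a)))

lemma det_cellMatrix_submatrix_update (z : Entry I → ℂ) (p : Entry I) :
    ((cellMatrix I z).submatrix (Function.update Subtype.val p.1.2 p.1.1) id).det = z p := by
  have hrow : (cellMatrix I z).submatrix (Function.update Subtype.val p.1.2 p.1.1) id =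
      (1 : Matrix I I ℂ).updateRow p.1.2 (cellMatrix I z p.1.1) := by
    ext b c
    rw [Matrix.submatrix_apply, Function.update_apply, Matrix.updateRow_apply]
    split_ifs
    exacts [rfl, cellMatrix_apply_coe z b c]
  rw [hrow, ← Matrix.cramer_transpose_apply, Matrix.transpose_one, Matrix.cramer_one]
  exact cellMatrix_apply_entry z p

lemma exists_cellProj_mem_bigCell_weight_lt (hI : I.card = k) {z : Entry I → ℂ} {p : Entry I}
    (hp : p.1.1 < p.1.2) (hz : z p ≠ 0) :
    ∃ J : Finset (Fin n), J.card = k ∧ weight J < weight I ∧ cellProj hI z ∈ bigCell k J := by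
  obtain ⟨J, e, he⟩ := exists_equiv_update p.2 p.1.2
  refine ⟨J, (Finset.card_eq_of_equiv e).symm.trans hI, weight_lt_of_update hp he, ?_⟩
  rwa [cellProj_mem_bigCell_iff hI z e, funext he, det_cellMatrix_submatrix_update]

/-- The union of the big cells of weight less than `m`. -/
def lower (k n m : ℕ) : Set (Gr k n) := ⋃ J ∈ subsetsBelow k n m, bigCell k J

lemma isOpen_lower (m : ℕ) : IsOpen (lower k n m) :=
  isOpen_biUnion fun _ _ => isOpen_bigCell

lemma lower_zero : lower k n 0 = ∅ := by
  simp [lower, subsetsBelow_zero]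

lemma lower_weight_succ (hI : I.card = k) :
    lower k n (weight I + 1) = lower k n (weight I) ∪ bigCell k I := by
  rw [lower, subsetsBelow_weight_succ hI, Finset.set_biUnion_insert, Set.union_comm, lower]

lemma lower_subset_succ (m : ℕ) : lower k n m ⊆ lower k n (m + 1) :=
  Set.biUnion_subset_biUnion_left fun _ hJ =>
    mem_subsetsBelow.2 ((mem_subsetsBelow.1 hJ).imp_right Nat.lt_succ_of_lt)

lemma lower_weight_univ_succ :
    lower k n (weight (Finset.univ : Finset (Fin n)) + 1) = Set.univ := by
  refine Set.eq_univ_of_forall fun P => ?_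
  obtain ⟨J, hJ, hdet⟩ := exists_det_submatrix_ne_zero P.2.1 P.2.2.1 P.2.2.2
  rw [lower, subsetsBelow_weight_univ_succ]
  exact Set.mem_biUnion (Finset.mem_powersetCard_univ.2 hJ) hdet

lemma mem_lower_iff {m : ℕ} {P : Gr k n} :
    P ∈ lower k n m ↔ ∃ J : Finset (Fin n), J.card = k ∧ weight J < m ∧ P ∈ bigCell k J := by
  simp only [lower, Set.mem_iUnion₂, mem_subsetsBelow, exists_prop, and_assoc]

lemma cellProj_mem_lower_iff (hI : I.card = k) (z : Entry I → ℂ) :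
    cellProj hI z ∈ lower k n (weight I) ↔ ∃ p : Entry I, p.1.1 < p.1.2 ∧ z p ≠ 0 := by
  rw [mem_lower_iff]
  constructor
  · rintro ⟨J, hJ, hw, hP⟩
    exact exists_lt_of_cellProj_mem_bigCell hI hJ hw hP
  · rintro ⟨p, hp, hz⟩
    exact exists_cellProj_mem_bigCell_weight_lt hI hp hz

end Lower

open SingularChain

section EntryCoordinates

variable {n : ℕ} {I : Finset (Fin n)}

/-- The real and imaginary parts of the free entries of an echelon matrix. -/
def entryPart (i : Entry I × Bool) : (Entry I → ℂ) →L[ℝ] ℝ :=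
  (if i.2 then Complex.reCLM else Complex.imCLM).comp (ContinuousLinearMap.proj i.1)

/-- The basis dual to `entryPart`. -/
def entryBasis (i : Entry I × Bool) : Entry I → ℂ :=
  Pi.single i.1 (if i.2 then 1 else Complex.I)

lemma entryPart_entryBasis (i j : Entry I × Bool) :
    entryPart i (entryBasis j) = if i = j then 1 else 0 := by
  obtain ⟨p, a⟩ := i
  obtain ⟨r, b⟩ := j
  by_cases h : p = r
  · subst h
    cases a <;> cases b <;> simp [entryPart, entryBasis]
  · simp [entryPart, entryBasis, h]

variable (I) in
/-- The positions of the free entries lying above their pivot. -/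
def upperEntries : Finset (Entry I) := {p | p.1.1 < p.1.2}

lemma mem_upperEntries {p : Entry I} : p ∈ upperEntries I ↔ p.1.1 < p.1.2 :=
  Finset.mem_filter_univ p

lemma mem_nonzeroLocus_entryPart (z : Entry I → ℂ) :
    z ∈ nonzeroLocus entryPart (upperEntries I ×ˢ Finset.univ) ↔
      ∃ p : Entry I, p.1.1 < p.1.2 ∧ z p ≠ 0 := by
  have hz (p : Entry I) : (∃ b, entryPart (p, b) z ≠ 0) ↔ z p ≠ 0 := by
    rw [Bool.exists_bool, or_comm, ← not_and_or]
    exact not_congr (Complex.ext_iff (w := 0)).symm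
  simp only [← hz, ← exists_and_left, nonzeroLocus, Set.mem_ofPred_eq, Prod.exists,
    Finset.mem_product, mem_upperEntries, Finset.mem_univ, and_true]

end EntryCoordinates

section Homology

variable {k n : ℕ} {I : Finset (Fin n)} {R : Type} [CommRing R]

lemma chart_mem_nonzeroLocus_iff (hI : I.card = k) (P : bigCell k I) :
    chart hI P ∈ nonzeroLocus entryPart (upperEntries I ×ˢ Finset.univ) ↔
      (P : Gr k n) ∈ lower k n (weight I) ∩ bigCell k I := by
  obtain ⟨z, rfl⟩ := (chart hI).symm.surjective P
  rw [(chart hI).apply_symm_apply, mem_nonzeroLocus_entryPart, ← cellProj_mem_lower_iff hI]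
  exact (and_iff_left (cellProj_mem_bigCell hI z)).symm

lemma isFreeOfRank_rel_lower (hI : I.card = k) (d : ℕ) :
    IsFreeOfRank R ((rel R (lower_subset_succ (k := k) (n := n) (weight I))).homology d)
      (if d = 2 * (upperEntries I).card then 1 else 0) := by
  rw [isFreeOfRank_rel_congr (h' := Set.subset_union_left) rfl (lower_weight_succ hI),
    isFreeOfRank_rel_excision (isOpen_lower _) isOpen_bigCell,
    isFreeOfRank_rel_of_homeomorph _ (Set.subset_univ _)
      ((chart hI).trans (Homeomorph.Set.univ _).symm) (chart_mem_nonzeroLocus_iff hI)]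
  simpa [mul_comm] using isFreeOfRank_rel_nonzeroLocus (R := R) entryPart_entryBasis
    (upperEntries I ×ˢ Finset.univ) d

/-- The number of sets in `s` whose Schubert cell has real codimension `d`. -/
def cellCount (s : Finset (Finset (Fin n))) (d : ℕ) : ℕ :=
  ∑ I ∈ s, if d = 2 * (upperEntries I).card then 1 else 0

lemma cellCount_of_odd (s : Finset (Finset (Fin n))) {d : ℕ} (hd : Odd d) : cellCount s d = 0 :=
  Finset.sum_eq_zero fun _ _ => if_neg (Nat.ne_of_odd_add (hd.add_even (even_two_mul _)))

lemma cellCount_insert {s : Finset (Finset (Fin n))} (hI : I ∉ s) (d : ℕ) :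
    cellCount (insert I s) d = cellCount s d + if d = 2 * (upperEntries I).card then 1 else 0 := by
  rw [cellCount, Finset.sum_insert hI, add_comm, cellCount]

lemma isFreeOfRank_homology_lower (m d : ℕ) :
    IsFreeOfRank R (((chains R).obj (TopCat.of (lower k n m))).homology d)
      (cellCount (subsetsBelow k n m) d) := by
  induction m generalizing d with
  | zero =>
    have : IsEmpty (TopCat.of (lower k n 0)) := Set.isEmpty_coe_sort.2 lower_zero
    rw [subsetsBelow_zero]
    exact isFreeOfRank_homology_of_isEmpty _ d
  | succ m ih =>
    by_cases h : ∃ I : Finset (Fin n), I.card = k ∧ weight I = m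
    · obtain ⟨I, hI, rfl⟩ := h
      rw [subsetsBelow_weight_succ hI, cellCount_insert notMem_subsetsBelow_weight]
      exact isFreeOfRank_homology_of_even (lower_subset_succ (weight I)) ih
        (isFreeOfRank_rel_lower hI) (fun _ => cellCount_of_odd _)
        (fun _ hd => if_neg (Nat.ne_of_odd_add (hd.add_even (even_two_mul _)))) d
    · push Not at h
      rw [lower, subsetsBelow_succ_of_forall_ne h]
      exact ih d

theorem isFreeOfRank_singularHomology (d : ℕ) :
    IsFreeOfRank R (singularHomology R (Gr k n) d)
      (cellCount (Finset.powersetCard k (Finset.univ : Finset (Fin n))) d) := by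
  have h := isFreeOfRank_homology_lower (R := R) (k := k) (n := n)
    (weight (Finset.univ : Finset (Fin n)) + 1) d
  rw [lower_weight_univ_succ, subsetsBelow_weight_univ_succ] at h
  exact (isFreeOfRank_homology_iff
    ((chains R).map (TopCat.isoOfHomeo (Homeomorph.Set.univ (Gr k n))).hom)).1 h

lemma sum_cellCount_mul_pow {s : Finset (Finset (Fin n))} {M : ℕ}
    (hM : ∀ I ∈ s, 2 * (upperEntries I).card < M) (q : ℝ) :
    ∑ d ∈ Finset.range M, (cellCount s d : ℝ) * q ^ d =
      ∑ I ∈ s, q ^ (2 * (upperEntries I).card) := by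
  simp only [cellCount, Nat.cast_sum, Nat.cast_ite, Nat.cast_one, Nat.cast_zero, Finset.sum_mul,
    ite_mul, one_mul, zero_mul]
  rw [Finset.sum_comm]
  refine Finset.sum_congr rfl fun I hI => ?_
  rw [Finset.sum_ite_eq', if_pos (Finset.mem_range.2 (hM I hI))]

end Homology

end Gr

section QuantumBinomial

lemma pow_mul_qint (m : ℕ) {q : ℝ} (hq : q ≠ 0) :
    q ^ m * qint m q = ∑ i ∈ Finset.range m, q ^ (2 * i + 1) := by
  rw [qint, Finset.mul_sum, ← Finset.sum_range_reflect]
  refine Finset.sum_congr rfl fun i hi => ?_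
  have hi := Finset.mem_range.1 hi
  rw [← zpow_natCast, ← zpow_natCast, ← zpow_add₀ hq]
  congr 1
  push_cast [Nat.cast_sub (show i ≤ m - 1 by lia), Nat.cast_sub (show 1 ≤ m by lia)]
  ring

lemma qint_ne_zero {m : ℕ} (hm : m ≠ 0) {q : ℝ} (hq : q ≠ 0) : qint m q ≠ 0 := by
  have h : q ^ m * qint m q = q * ∑ i ∈ Finset.range m, (q ^ 2) ^ i := by
    rw [pow_mul_qint m hq, Finset.mul_sum]
    exact Finset.sum_congr rfl fun i _ => by ring
  have hpos : 0 < ∑ i ∈ Finset.range m, (q ^ 2) ^ i :=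
    Finset.sum_pos (fun i _ => by positivity) (Finset.nonempty_range_iff.2 hm)
  exact right_ne_zero_of_mul (h ▸ mul_ne_zero hq hpos.ne')

lemma qint_add (a b : ℕ) {q : ℝ} (hq : q ≠ 0) :
    q ^ a * qint (a + b) q = qint b q + q ^ (a + b) * qint a q := by
  have h : q ^ (b + a) * qint (b + a) q = q ^ b * qint b q + q ^ (2 * b) * (q ^ a * qint a q) := by
    rw [pow_mul_qint _ hq, pow_mul_qint _ hq, pow_mul_qint _ hq, Finset.sum_range_add,
      Finset.mul_sum]
    congr 1
    exact Finset.sum_congr rfl fun i _ => by ring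
  refine mul_left_cancel₀ (pow_ne_zero b hq) ?_
  rw [add_comm b a] at h
  linear_combination h

lemma qfact_succ (m : ℕ) (q : ℝ) : qfact (m + 1) q = qfact m q * qint (m + 1) q :=
  Finset.prod_range_succ _ m

lemma qfact_ne_zero (m : ℕ) {q : ℝ} (hq : q ≠ 0) : qfact m q ≠ 0 :=
  Finset.prod_ne_zero_iff.2 fun i _ => qint_ne_zero i.succ_ne_zero hq

/-- The pairs of an element of `I` and a smaller natural number not in `I`. -/
def inversions (I : Finset ℕ) : Finset (Σ _ : ℕ, ℕ) := I.sigma fun a => Finset.range a \ I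

lemma card_inversions_range (k : ℕ) : (inversions (Finset.range k)).card = 0 := by
  rw [inversions, Finset.card_sigma]
  refine Finset.sum_eq_zero fun a ha => ?_
  rw [Finset.sdiff_eq_empty_iff_subset.2
    (Finset.range_subset_range.2 (Finset.mem_range.1 ha).le), Finset.card_empty]

lemma card_inversions_insert {I : Finset ℕ} {n : ℕ} (hI : I ⊆ Finset.range n) :
    (inversions (insert n I)).card = (inversions I).card + (n - I.card) := by
  have hn : n ∉ I := fun h => Finset.notMem_range_self (hI h)
  rw [inversions, inversions, Finset.card_sigma, Finset.card_sigma, Finset.sum_insert hn, add_comm]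
  congr 1
  · refine Finset.sum_congr rfl fun a ha => ?_
    rw [Finset.sdiff_insert_of_notMem]
    simpa using (Finset.mem_range.1 (hI ha)).le
  · rw [Finset.sdiff_insert_of_notMem Finset.notMem_range_self, Finset.card_sdiff_of_subset hI,
      Finset.card_range]

/-- The generating function of the number of inversions of the `k`-element subsets of
`{0, …, n - 1}`. -/
def inversionSum (k n : ℕ) (x : ℝ) : ℝ :=
  ∑ I ∈ Finset.powersetCard k (Finset.range n), x ^ (inversions I).card

lemma inversionSum_zero (n : ℕ) (x : ℝ) : inversionSum 0 n x = 1 := by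
  simp [inversionSum, inversions]

lemma inversionSum_self (k : ℕ) (x : ℝ) : inversionSum k k x = 1 := by
  have : Finset.powersetCard k (Finset.range k) = {Finset.range k} := by
    simpa using Finset.powersetCard_self (Finset.range k)
  simp [inversionSum, this, card_inversions_range]

lemma inversionSum_succ_succ (k n : ℕ) (x : ℝ) :
    inversionSum (k + 1) (n + 1) x =
      inversionSum (k + 1) n x + x ^ (n - k) * inversionSum k n x := by
  have hsub {m : ℕ} {I : Finset ℕ} (hI : I ∈ Finset.powersetCard m (Finset.range n)) : n ∉ I :=
    fun h => Finset.notMem_range_self ((Finset.mem_powersetCard.1 hI).1 h)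
  rw [inversionSum, Finset.range_add_one, Finset.powersetCard_succ_insert Finset.notMem_range_self,
    Finset.sum_union, Finset.sum_image, inversionSum, inversionSum, Finset.mul_sum]
  · congr 1
    refine Finset.sum_congr rfl fun I hI => ?_
    obtain ⟨hI, hk⟩ := Finset.mem_powersetCard.1 hI
    rw [card_inversions_insert hI, hk, pow_add, mul_comm]
  · intro I hI J hJ h
    rw [← Finset.erase_insert (hsub hI), ← Finset.erase_insert (hsub hJ)]
    exact congrArg (Finset.erase · n) h
  · refine Finset.disjoint_left.2 fun I hI hI' => ?_
    obtain ⟨J, -, rfl⟩ := Finset.mem_image.1 hI'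
    exact hsub hI (Finset.mem_insert_self n J)

lemma inversionSum_mul_qfact (k l : ℕ) {q : ℝ} (hq : q ≠ 0) :
    inversionSum k (k + l) (q ^ 2) * (qfact k q * qfact l q) = q ^ (k * l) * qfact (k + l) q := by
  induction k generalizing l with
  | zero => simp [inversionSum_zero, qfact]
  | succ k ihk =>
    induction l with
    | zero => simp [inversionSum_self, qfact]
    | succ l ihl =>
      have hk := ihk (l + 1)
      have hadd := qint_add (k + 1) (l + 1) hq
      rw [show k + 1 + (l + 1) = k + l + 1 + 1 by ring] at hadd ⊢
      rw [show k + (l + 1) = k + l + 1 by ring] at hk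
      rw [show k + 1 + l = k + l + 1 by ring] at ihl
      rw [inversionSum_succ_succ, show k + l + 1 - k = l + 1 by lia, qfact_succ (k + l + 1)]
      rw [qfact_succ l] at hk ⊢
      rw [qfact_succ k] at ihl ⊢
      linear_combination qint (l + 1) q * ihl + q ^ (2 * (l + 1)) * qint (k + 1) q * hk -
        q ^ ((k + 1) * l) * qfact (k + l + 1) q * hadd

lemma inversionSum_eq_qbinom {k n : ℕ} (hkn : k ≤ n) {q : ℝ} (hq : q ≠ 0) :
    inversionSum k n (q ^ 2) = q ^ (n * k - k * k) * qbinom n k q := by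
  obtain ⟨l, rfl⟩ := Nat.exists_eq_add_of_le hkn
  rw [qbinom, ← mul_div_assoc, eq_div_iff
    (mul_ne_zero (qfact_ne_zero _ hq) (qfact_ne_zero _ hq)), Nat.add_sub_cancel_left,
    inversionSum_mul_qfact k l hq, add_mul, Nat.add_sub_cancel_left, mul_comm l k]

end QuantumBinomial

namespace Gr

lemma card_upperEntries {n : ℕ} (I : Finset (Fin n)) :
    (upperEntries I).card = (inversions (I.map Fin.valEmbedding)).card := by
  refine Finset.card_bij (fun p _ => ⟨p.1.2.1, p.1.1⟩) ?_ ?_ ?_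
  · rintro ⟨⟨j, a⟩, hj⟩ hp
    simp only [upperEntries, Finset.mem_filter] at hp
    simp only [inversions, Finset.mem_sigma, Finset.mem_sdiff, Finset.mem_range]
    exact ⟨Finset.mem_map_of_mem _ a.2, hp.2, fun h => hj ((Finset.mem_map' _).1 h)⟩
  · rintro ⟨⟨j, a⟩, hj⟩ - ⟨⟨j', a'⟩, hj'⟩ - h
    simp only [Sigma.mk.injEq, heq_eq_eq, Fin.val_inj, Subtype.val_inj] at h
    simp [h.1, h.2]
  · rintro ⟨a, j⟩ h
    simp only [inversions, Finset.mem_sigma, Finset.mem_map, Finset.mem_sdiff, Finset.mem_range]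
      at h
    obtain ⟨⟨a, ha, rfl⟩, hja, hj⟩ := h
    have hja' : j < (a : ℕ) := hja
    refine ⟨⟨(⟨j, hja'.trans a.2⟩, ⟨a, ha⟩), fun h => hj ⟨_, h, rfl⟩⟩, ?_, rfl⟩
    exact Finset.mem_filter.2 ⟨Finset.mem_univ _, hja'⟩

lemma sum_pow_card_upperEntries (k n : ℕ) (q : ℝ) :
    ∑ I ∈ Finset.powersetCard k (Finset.univ : Finset (Fin n)), q ^ (2 * (upperEntries I).card) =
      inversionSum k n (q ^ 2) := by
  have h : Finset.range n = Finset.univ.map (Fin.valEmbedding (n := n)) := by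
    ext i
    simp
  rw [inversionSum, h, Finset.powersetCard_map, Finset.sum_map]
  refine Finset.sum_congr rfl fun I _ => ?_
  rw [card_upperEntries, pow_mul]
  rfl

end Gr

theorem poincarePoly_grassmannian_general (R : Type) [CommRing R] {k n : ℕ} (hkn : k ≤ n) :
    ∃ b : ℕ → ℕ, (∀ d, IsFreeOfRank R (singularHomology R (Gr k n) d) (b d)) ∧
      ∃ M, (∀ d ≥ M, b d = 0) ∧ ∀ q : ℝ, q ≠ 0 →
        q ^ (n * k - k * k) * qbinom n k q = ∑ d ∈ Finset.range M, (b d : ℝ) * q ^ d := by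
  let s := Finset.powersetCard k (Finset.univ : Finset (Fin n))
  let M := s.sup (fun I => 2 * (Gr.upperEntries I).card) + 1
  have hM (I : Finset (Fin n)) (hI : I ∈ s) : 2 * (Gr.upperEntries I).card < M :=
    Nat.lt_succ_of_le (Finset.le_sup (f := fun I => 2 * (Gr.upperEntries I).card) hI)
  refine ⟨Gr.cellCount s, Gr.isFreeOfRank_singularHomology, M, fun d hd => ?_,
    fun q hq => ?_⟩
  · exact Finset.sum_eq_zero fun I hI => if_neg ((hM I hI).trans_le hd).ne'
  · rw [Gr.sum_cellCount_mul_pow hM, Gr.sum_pow_card_upperEntries, inversionSum_eq_qbinom hkn hq]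

theorem poincarePoly_grassmannian (k n : ℕ) (hk : 1 ≤ k) (hkn : k ≤ n) :
    IsPoincarePoly (Gr k n) (fun q => q ^ (n * k - k * k) * qbinom n k q) := by
  obtain ⟨b, hb, h⟩ := poincarePoly_grassmannian_general ℚ hkn
  obtain rfl : b = betti (Gr k n) := funext fun d => (hb d).finrank_eq.symm
  exact h
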